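/- Let N be a finite group of odd order, let φ : Z_2 → Aut(N) be a group homomorphism, and let G = N ⋊_φ Z_2. Then every balanced subset of G \ {(0,0)} of size k with k ≡ 8 (mod 10) admits an alternating parity 4-weak sequencing. -/

import Mathlib

abbrev Z2 : Type := Multiplicative (ZMod 2)

/-- The partial-sums condition for a `t`-weak sequencing of the list `l`. -/
def WeakSeqList {G : Type*} [Group G] (t : ℕ) (l : List G) : Prop :=
  ∀ i j : ℕ, i < j → j ≤ l.length → j - i ≤ t →
    (l.take i).prod ≠ (l.take j).prod

/-- `l` is an ordering of the finite set `S`. -/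
def IsOrderingOf {G : Type*} [Group G] (l : List G) (S : Finset G) : Prop :=
  l.Nodup ∧ ∀ x, x ∈ l ↔ x ∈ S

/-- Consecutive elements of `l` alternate between even and odd. -/
def AltList {N : Type*} [Group N] {φ : Z2 →* MulAut N}
    (l : List (N ⋊[φ] Z2)) : Prop :=
  l.Chain' (fun a b => a.right ≠ b.right)

/-- Number of even elements of `S`. -/
def evenCount {N : Type*} [Group N] {φ : Z2 →* MulAut N}
    (S : Finset (N ⋊[φ] Z2)) : ℕ :=
  (S.filter (fun g => g.right = 1)).card

/-- `S` has type `(a, b)`. -/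
def HasType {N : Type*} [Group N] {φ : Z2 →* MulAut N}
    (S : Finset (N ⋊[φ] Z2)) (a b : ℕ) : Prop :=
  evenCount S = a ∧ S.card = a + b

namespace WS

def mk (a b c d : ℕ) : ℕ := a * 512 + b * 64 + c * 8 + d
def rot (i : ℕ) : ℕ := (i % 64) * 64 + i / 64 % 64
def uu (i : ℕ) : ℕ := (i % 512) * 8 + i / 512 % 8

def wins : Bool → List ℕ → List ℕ
  | true, a :: b :: c :: d :: t => mk a b c d :: mk a b c 7 :: wins false (b :: c :: d :: t)
  | true, [a, b, c] => [mk a b c 7]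
  | false, a :: b :: c :: d :: t => mk b c d a :: wins true (b :: c :: d :: t)
  | _, _ => []

def perm : ℕ → ℕ → List ℕ → List ℕ
  | 0, _, l => l
  | n + 1, c, l =>
    l.getD (c % (n + 1)) 0 :: perm n (c / (n + 1)) (l.eraseIdx (c % (n + 1)))

def inter : List ℕ → List ℕ → List ℕ
  | a :: p, b :: q => a :: b :: inter p q
  | _, _ => []

def seq4 (c d : ℕ) : List ℕ := inter (perm 4 c [0, 1, 2, 3]) (perm 4 d [0, 1, 2, 3])

def arr4 (c : ℕ) : List ℕ := wins false (seq4 (c % 24) (c / 24 % 24))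

def backL (c d a : ℕ) : List ℕ :=
  let p := perm 3 c [0, 1, 2]
  let q := perm 3 d [0, 1, 2]
  if a % 2 = 1 then (inter q p).drop a else inter (p.drop (a / 2)) (q.drop (a / 2))

def frontL (c d a : ℕ) : List ℕ := (inter (perm 3 d [0, 1, 2]) (perm 3 c [0, 1, 2])).take a

def arr3' (c d a : ℕ) : List ℕ :=
  wins (a % 2 == 0) ((backL c d a).reverse ++ [4, 5, 5]) ++ wins false ([4, 3, 3] ++ frontL c d a)

def arr3 (c : ℕ) : List ℕ := arr3' (c % 6) (c / 6 % 6) (c / 36 % 7)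

def bits (w : ℕ) : ℕ := 1 <<< w ||| 1 <<< rot w

def pat (q : ℕ) : ℕ :=
  1 <<< (0 * q) ||| 1 <<< (1 * q) ||| 1 <<< (2 * q) ||| 1 <<< (3 * q) |||
    1 <<< (4 * q) ||| 1 <<< (5 * q) ||| 1 <<< (6 * q) ||| 1 <<< (7 * q)

def ex1 (w q : ℕ) : ℕ := (pat q <<< (w - w / q % 8 * q)) ^^^ (1 <<< w)

def ex4 (w : ℕ) : ℕ := ex1 w 1 ||| ex1 w 8 ||| ex1 w 64 ||| ex1 w 512

def excl (w : ℕ) : ℕ := ex4 w ||| ex4 (rot w)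

def force {α : Type} (n : ℕ) (k : ℕ → α) : α :=
  match n with
  | 0 => k 0
  | m + 1 => k (m + 1)

def getw (w : ℕ) (T : List ℕ) (U h : ℕ) : ℕ :=
  let x := T.getD (h / 2) w
  let y := if h % 2 = 1 then rot x else x
  if U = 1 then uu y else y

def rule4 (w1 w2 w3 w4 : ℕ) : Bool :=
  w1 % 64 == w2 % 64 && (w3 % 64 == w4 % 64 &&
    (let X1 := w1 / 64 % 64
     let X2 := w2 / 64 % 64
     let X3 := w3 / 64 % 64
     let X4 := w4 / 64 % 64
     (X2 == X3 && (X1 != X4 && (X1 / 8 == X4 / 8 || X1 % 8 == X4 % 8))) ||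
     (X1 / 8 == X3 / 8 && (X2 / 8 == X4 / 8 && (X1 % 8 == X4 % 8 && (X2 % 8 == X3 % 8 &&
       (X1 / 8 != X2 / 8 && X1 % 8 != X2 % 8)))))))

def rule (h w : ℕ) (T : List ℕ) : Bool :=
  rule4 (getw w T (h % 2) (h / 2 % 32)) (getw w T (h % 2) (h / 64 % 32))
    (getw w T (h % 2) (h / 2048 % 32)) (getw w T (h % 2) (h / 65536 % 32))

abbrev Frame := List ℕ × List ℕ × ℕ

def normWs (F : ℕ) : List ℕ → List ℕ
  | [] => []
  | w :: ws => if F.testBit w then normWs F ws else w :: ws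

def norm : List Frame → List Frame
  | [] => []
  | (ws, T, F) :: st =>
    match normWs F ws with
    | [] => norm st
    | w :: ws' => (w :: ws', T, F) :: st

def run (arr : ℕ → List ℕ) : List ℕ → List Frame → Bool
  | [], st => (norm st).isEmpty
  | c :: s, st =>
    match norm st with
    | [] => true
    | (w0, T, F) :: st' =>
      match w0 with
      | [] => false
      | w0 :: ws =>
      force w0 fun w => force (F ||| bits w) fun F1 =>
        if c < 1024 then
          force (F ||| excl w) fun F2 => run arr s ((arr c, w :: T, F2) :: (ws, T, F1) :: st')
        else rule (c - 1024) w T && run arr s ((ws, T, F1) :: st')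

def check (arr : ℕ → List ℕ) (F : ℕ) : List ℕ → Bool
  | [] => false
  | c :: s => run arr s [(arr c, [], F)]

def dec : ℕ → ℕ → List ℕ
  | 0, _ => []
  | f + 1, n => if n = 0 then [] else force (n % 16777216) fun x => (x - 1) :: force (n / 16777216) (dec f)

def F3 : ℕ := bits (mk 4 5 5 7) ||| bits (mk 3 3 0 7) ||| bits (mk 3 3 1 7) ||| bits (mk 3 3 2 7) |||
  bits (mk 3 3 0 4) ||| bits (mk 3 3 1 4) ||| bits (mk 3 3 2 4)

section Sound
variable {G : Type*} [Group G]

def TruthG (f0 f1 : ℕ → G) (v0 v1 : ℕ → Prop) (i : ℕ) : Prop :=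
  v0 (i / 512 % 8) ∧ v1 (i / 64 % 8) ∧ v0 (i / 8 % 8) ∧ v1 (i % 8) ∧
    f0 (i / 512 % 8) * f1 (i / 64 % 8) * f0 (i / 8 % 8) * f1 (i % 8) = 1

variable {f0 f1 : ℕ → G} {v0 v1 : ℕ → Prop}

theorem exd (i : ℕ) : ∃ n a b c d : ℕ, a < 8 ∧ b < 8 ∧ c < 8 ∧ d < 8 ∧
    i = n * 4096 + a * 512 + b * 64 + c * 8 + d :=
  ⟨i / 4096, i / 512 % 8, i / 64 % 8, i / 8 % 8, i % 8, by omega, by omega, by omega, by omega,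
    by omega⟩

theorem dg {n a b c d : ℕ} (ha : a < 8) (hb : b < 8) (hc : c < 8) (hd : d < 8) :
    (n * 4096 + a * 512 + b * 64 + c * 8 + d) / 512 % 8 = a ∧
    (n * 4096 + a * 512 + b * 64 + c * 8 + d) / 64 % 8 = b ∧
    (n * 4096 + a * 512 + b * 64 + c * 8 + d) / 8 % 8 = c ∧
    (n * 4096 + a * 512 + b * 64 + c * 8 + d) % 8 = d := by
  refine ⟨?_, ?_, ?_, ?_⟩ <;> omega

theorem truth_dg {n a b c d : ℕ} (ha : a < 8) (hb : b < 8) (hc : c < 8) (hd : d < 8) :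
    TruthG f0 f1 v0 v1 (n * 4096 + a * 512 + b * 64 + c * 8 + d) ↔
      v0 a ∧ v1 b ∧ v0 c ∧ v1 d ∧ f0 a * f1 b * f0 c * f1 d = 1 := by
  obtain ⟨h1, h2, h3, h4⟩ := dg (n := n) ha hb hc hd
  unfold TruthG
  rw [h1, h2, h3, h4]

theorem uu_dg {n a b c d : ℕ} (ha : a < 8) (hb : b < 8) (hc : c < 8) (hd : d < 8) :
    uu (n * 4096 + a * 512 + b * 64 + c * 8 + d) = 0 * 4096 + b * 512 + c * 64 + d * 8 + a := by
  have h : (n * 4096 + a * 512 + b * 64 + c * 8 + d) % 512 = b * 64 + c * 8 + d := by omega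
  rw [uu, (dg ha hb hc hd).1, h]; ring

theorem rot_dg {n a b c d : ℕ} (ha : a < 8) (hb : b < 8) (hc : c < 8) (hd : d < 8) :
    rot (n * 4096 + a * 512 + b * 64 + c * 8 + d) = 0 * 4096 + c * 512 + d * 64 + a * 8 + b := by
  have h : (n * 4096 + a * 512 + b * 64 + c * 8 + d) % 64 = c * 8 + d := by omega
  have h2 : (n * 4096 + a * 512 + b * 64 + c * 8 + d) / 64 % 64 = a * 8 + b := by omega
  rw [rot, h2, h]; ring

theorem rot4 {a b c d : G} (h : a * b * c * d = 1) : b * c * d * a = 1 := by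
  have : a * (b * c * d) = 1 := by simpa [mul_assoc] using h
  rwa [mul_eq_one_iff_eq_inv, eq_comm, inv_eq_iff_mul_eq_one] at this

theorem TruthG.uu {i : ℕ} (h : TruthG f0 f1 v0 v1 i) : TruthG f1 f0 v1 v0 (uu i) := by
  obtain ⟨n, a, b, c, d, ha, hb, hc, hd, rfl⟩ := exd i
  rw [truth_dg ha hb hc hd] at h
  rw [uu_dg ha hb hc hd, truth_dg hb hc hd ha]
  exact ⟨h.2.1, h.2.2.1, h.2.2.2.1, h.1, rot4 h.2.2.2.2⟩

theorem truth_rot {i : ℕ} : TruthG f0 f1 v0 v1 (rot i) ↔ TruthG f0 f1 v0 v1 i := by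
  obtain ⟨n, a, b, c, d, ha, hb, hc, hd, rfl⟩ := exd i
  rw [rot_dg ha hb hc hd, truth_dg hc hd ha hb, truth_dg ha hb hc hd]
  exact ⟨fun h => ⟨h.2.2.1, h.2.2.2.1, h.1, h.2.1, rot4 (rot4 h.2.2.2.2)⟩,
    fun h => ⟨h.2.2.1, h.2.2.2.1, h.1, h.2.1, rot4 (rot4 h.2.2.2.2)⟩⟩

theorem rule4_sound (i0 : ∀ a b, v0 a → v0 b → f0 a = f0 b → a = b)
    (i1 : ∀ a b, v1 a → v1 b → f1 a = f1 b → a = b)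
    (sq : ∀ a b, v0 a → v0 b → ((f0 a)⁻¹ * f0 b) * ((f0 a)⁻¹ * f0 b) = 1 → f0 a = f0 b)
    {w1 w2 w3 w4 : ℕ}
    (h1 : TruthG f0 f1 v0 v1 w1) (h2 : TruthG f0 f1 v0 v1 w2)
    (h3 : TruthG f0 f1 v0 v1 w3) (h4 : TruthG f0 f1 v0 v1 w4)
    (hr : rule4 w1 w2 w3 w4 = true) : False := by
  simp only [rule4, Bool.and_eq_true, Bool.or_eq_true, beq_iff_eq, bne_iff_ne] at hr
  obtain ⟨p, q, hr⟩ := hr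
  obtain ⟨a1, a2, a3, a4, a5⟩ := h1
  obtain ⟨b1, b2, b3, b4, b5⟩ := h2
  obtain ⟨c1, c2, c3, c4, c5⟩ := h3
  obtain ⟨d1, d2, d3, d4, d5⟩ := h4
  have hab := a5.trans b5.symm
  have hcd := c5.trans d5.symm
  rw [show w1 / 8 % 8 = w2 / 8 % 8 by omega, show w1 % 8 = w2 % 8 by omega] at hab
  rw [show w3 / 8 % 8 = w4 / 8 % 8 by omega, show w3 % 8 = w4 % 8 by omega] at hcd
  have hab := mul_right_cancel (mul_right_cancel hab)
  have hcd := mul_right_cancel (mul_right_cancel hcd)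
  rcases hr with ⟨r1, r2, r3⟩ | ⟨r1, r2, r3, r4, r5, r6⟩
  · rw [show w3 / 512 % 8 = w2 / 512 % 8 by omega, show w3 / 64 % 8 = w2 / 64 % 8 by omega] at hcd
    have had := hab.trans hcd
    rcases r3 with r3 | r3
    · rw [show w4 / 512 % 8 = w1 / 512 % 8 by omega] at had
      have := i1 _ _ a2 d2 (mul_left_cancel had)
      omega
    · rw [show w4 / 64 % 8 = w1 / 64 % 8 by omega] at had
      have := i0 _ _ a1 d1 (mul_right_cancel had)
      omega
  · rw [show w3 / 512 % 8 = w1 / 512 % 8 by omega, show w4 / 512 % 8 = w2 / 512 % 8 by omega,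
      show w3 / 64 % 8 = w2 / 64 % 8 by omega, show w4 / 64 % 8 = w1 / 64 % 8 by omega] at hcd
    have e1 : (f0 (w2 / 512 % 8))⁻¹ * f0 (w1 / 512 % 8) =
        f1 (w2 / 64 % 8) * (f1 (w1 / 64 % 8))⁻¹ := by
      rw [eq_mul_inv_iff_mul_eq, mul_assoc, hab, inv_mul_cancel_left]
    have e2 : (f0 (w2 / 512 % 8))⁻¹ * f0 (w1 / 512 % 8) =
        f1 (w1 / 64 % 8) * (f1 (w2 / 64 % 8))⁻¹ := by
      rw [eq_mul_inv_iff_mul_eq, mul_assoc, hcd, inv_mul_cancel_left]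
    have := sq (w2 / 512 % 8) (w1 / 512 % 8) b1 a1 (by nth_rewrite 1 [e1]; rw [e2]; group)
    have := i0 _ _ b1 a1 this
    omega

theorem bits_test {w i : ℕ} (h : (bits w).testBit i = true) : i = w ∨ i = rot w := by
  simp only [bits, Nat.testBit_or, Bool.or_eq_true, Nat.one_shiftLeft, Nat.testBit_two_pow,
    decide_eq_true_eq] at h
  omega

theorem pat_test {q j : ℕ} : (pat q).testBit j = true ↔ ∃ x < 8, j = x * q := by
  simp only [pat, Nat.testBit_or, Bool.or_eq_true, Nat.one_shiftLeft, Nat.testBit_two_pow,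
    decide_eq_true_eq]
  constructor
  · rintro (((((((h | h) | h) | h) | h) | h) | h) | h)
    exacts [⟨0, by omega, h.symm⟩, ⟨1, by omega, h.symm⟩, ⟨2, by omega, h.symm⟩,
      ⟨3, by omega, h.symm⟩, ⟨4, by omega, h.symm⟩, ⟨5, by omega, h.symm⟩, ⟨6, by omega, h.symm⟩,
      ⟨7, by omega, h.symm⟩]
  · rintro ⟨x, hx, rfl⟩
    interval_cases x <;> simp

theorem ex1_test {w q i : ℕ} (h : (ex1 w q).testBit i = true) :
    ∃ x < 8, i = w - w / q % 8 * q + x * q ∧ i ≠ w := by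
  have hle : w / q % 8 * q ≤ w :=
    (Nat.mul_le_mul_right _ (Nat.mod_le _ _)).trans (Nat.div_mul_le_self _ _)
  simp only [ex1, Nat.testBit_xor, Nat.testBit_shiftLeft, Nat.one_shiftLeft,
    Nat.testBit_two_pow] at h
  by_cases hi : i = w
  · subst hi
    have : (pat q).testBit (i - (i - i / q % 8 * q)) = true :=
      pat_test.mpr ⟨i / q % 8, Nat.mod_lt _ (by norm_num), by omega⟩
    simp [this] at h
  · have hi' : ¬ w = i := fun h => hi h.symm
    simp only [hi', decide_false, Bool.xor_false, Bool.and_eq_true, decide_eq_true_eq] at h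
    obtain ⟨x, hx, hj⟩ := pat_test.mp h.2
    exact ⟨x, hx, by omega, hi⟩

theorem ex4_sound (i0 : ∀ a b, v0 a → v0 b → f0 a = f0 b → a = b)
    (i1 : ∀ a b, v1 a → v1 b → f1 a = f1 b → a = b) {w i : ℕ}
    (hw : TruthG f0 f1 v0 v1 w) (h : (ex4 w).testBit i = true) : ¬ TruthG f0 f1 v0 v1 i := by
  obtain ⟨n, a, b, c, d, ha, hb, hc, hd, rfl⟩ := exd w
  intro hi
  obtain ⟨e1, e2, e3, e4⟩ := dg (n := n) ha hb hc hd
  rw [truth_dg ha hb hc hd] at hw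
  obtain ⟨t1, t2, t3, t4, t5⟩ := hw
  simp only [ex4, Nat.testBit_or, Bool.or_eq_true] at h
  rcases h with ((h | h) | h) | h <;> obtain ⟨x, hx, h1, h2⟩ := ex1_test h <;> clear h
  · rw [Nat.div_one, e4] at h1
    have h3 : i = n * 4096 + a * 512 + b * 64 + c * 8 + x := by omega
    subst h3
    rw [truth_dg ha hb hc hx] at hi
    obtain ⟨s1, s2, s3, s4, s5⟩ := hi
    have := i1 _ _ t4 s4 (mul_left_cancel (t5.trans s5.symm))
    omega
  · rw [e3] at h1
    have h3 : i = n * 4096 + a * 512 + b * 64 + x * 8 + d := by omega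
    subst h3
    rw [truth_dg ha hb hx hd] at hi
    obtain ⟨s1, s2, s3, s4, s5⟩ := hi
    have := i0 _ _ t3 s3 (mul_left_cancel (mul_right_cancel (t5.trans s5.symm)))
    omega
  · rw [e2] at h1
    have h3 : i = n * 4096 + a * 512 + x * 64 + c * 8 + d := by omega
    subst h3
    rw [truth_dg ha hx hc hd] at hi
    obtain ⟨s1, s2, s3, s4, s5⟩ := hi
    have := i1 _ _ t2 s2 (mul_left_cancel (mul_right_cancel (mul_right_cancel
      (t5.trans s5.symm))))
    omega
  · rw [e1] at h1
    have h3 : i = n * 4096 + x * 512 + b * 64 + c * 8 + d := by omega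
    subst h3
    rw [truth_dg hx hb hc hd] at hi
    obtain ⟨s1, s2, s3, s4, s5⟩ := hi
    have := i0 _ _ t1 s1 (mul_right_cancel (mul_right_cancel (mul_right_cancel
      (t5.trans s5.symm))))
    omega

theorem excl_sound (i0 : ∀ a b, v0 a → v0 b → f0 a = f0 b → a = b)
    (i1 : ∀ a b, v1 a → v1 b → f1 a = f1 b → a = b) {w i : ℕ}
    (hw : TruthG f0 f1 v0 v1 w) (h : (excl w).testBit i = true) : ¬ TruthG f0 f1 v0 v1 i := by
  simp only [excl, Nat.testBit_or, Bool.or_eq_true] at h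
  rcases h with h | h
  · exact ex4_sound i0 i1 hw h
  · exact ex4_sound i0 i1 (truth_rot.mpr hw) h

theorem force_eq {α : Type} (n : ℕ) (k : ℕ → α) : force n k = k n := by
  cases n <;> rfl

theorem getD_mem {T : List ℕ} {P : ℕ → Prop} (hT : ∀ t ∈ T, P t) {w : ℕ} (hw : P w) (k : ℕ) :
    P (T.getD k w) := by
  by_cases h : k < T.length
  · rw [List.getD_eq_getElem _ _ h]; exact hT _ (List.getElem_mem h)
  · rw [List.getD_eq_default _ _ (not_lt.mp h)]; exact hw

theorem getw_sound0 {w : ℕ} {T : List ℕ} (hw : TruthG f0 f1 v0 v1 w)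
    (hT : ∀ t ∈ T, TruthG f0 f1 v0 v1 t) (U h : ℕ) (hU : U ≠ 1) :
    TruthG f0 f1 v0 v1 (getw w T U h) := by
  have := getD_mem hT hw (h / 2)
  unfold getw
  rw [if_neg hU]
  split_ifs
  · exact truth_rot.mpr this
  · exact this

theorem getw_sound1 {w : ℕ} {T : List ℕ} (hw : TruthG f0 f1 v0 v1 w)
    (hT : ∀ t ∈ T, TruthG f0 f1 v0 v1 t) (h : ℕ) :
    TruthG f1 f0 v1 v0 (getw w T 1 h) := by
  have := getD_mem hT hw (h / 2)
  unfold getw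
  rw [if_pos rfl]
  split_ifs
  · exact (truth_rot.mpr this).uu
  · exact this.uu

structure Hyp (f0 f1 : ℕ → G) (v0 v1 : ℕ → Prop) : Prop where
  i0 : ∀ a b, v0 a → v0 b → f0 a = f0 b → a = b
  i1 : ∀ a b, v1 a → v1 b → f1 a = f1 b → a = b
  s0 : ∀ a b, v0 a → v0 b → ((f0 a)⁻¹ * f0 b) * ((f0 a)⁻¹ * f0 b) = 1 → f0 a = f0 b
  s1 : ∀ a b, v1 a → v1 b → ((f1 a)⁻¹ * f1 b) * ((f1 a)⁻¹ * f1 b) = 1 → f1 a = f1 b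

theorem rule_sound (H : Hyp f0 f1 v0 v1) {w h : ℕ} {T : List ℕ} (hw : TruthG f0 f1 v0 v1 w)
    (hT : ∀ t ∈ T, TruthG f0 f1 v0 v1 t) (hr : rule h w T = true) : False := by
  unfold rule at hr
  by_cases hU : h % 2 = 1
  · rw [hU] at hr
    exact rule4_sound H.i1 H.i0 H.s1 (getw_sound1 hw hT _) (getw_sound1 hw hT _)
      (getw_sound1 hw hT _) (getw_sound1 hw hT _) hr
  · exact rule4_sound H.i0 H.i1 H.s0 (getw_sound0 hw hT _ _ hU) (getw_sound0 hw hT _ _ hU)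
      (getw_sound0 hw hT _ _ hU) (getw_sound0 hw hT _ _ hU) hr

def Claim (Tr : ℕ → Prop) (Good : Prop) (f : Frame) : Prop :=
  (∀ t ∈ f.2.1, Tr t) → (∀ i, f.2.2.testBit i = true → ¬ Tr i) → Good ∨ ∀ w ∈ f.1, ¬ Tr w

theorem normWs_sound {Tr : ℕ → Prop} {F : ℕ} (hF : ∀ i, F.testBit i = true → ¬ Tr i) :
    ∀ ws : List ℕ, (∀ w ∈ normWs F ws, ¬ Tr w) → ∀ w ∈ ws, ¬ Tr w
  | [], _ => by simp
  | w :: ws, h => by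
    unfold normWs at h
    split_ifs at h with hb
    · intro x hx
      rcases List.mem_cons.mp hx with rfl | hx
      · exact hF _ hb
      · exact normWs_sound hF ws h x hx
    · exact h

theorem norm_sound {Tr : ℕ → Prop} {Good : Prop} : ∀ st : List Frame,
    (∀ f ∈ norm st, Claim Tr Good f) → ∀ f ∈ st, Claim Tr Good f
  | [], _ => by simp
  | (ws, T, F) :: st, h => by
    unfold norm at h
    split at h
    · next hn =>
      intro f hf
      rcases List.mem_cons.mp hf with rfl | hf
      · intro _ hF
        right
        exact normWs_sound hF ws (by simp [hn])
      · exact norm_sound st h f hf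
    · next w ws' hn =>
      intro f hf
      rcases List.mem_cons.mp hf with rfl | hf
      · intro hT hF
        rcases h _ List.mem_cons_self hT hF with hg | hg
        · exact Or.inl hg
        · exact Or.inr (normWs_sound hF ws (by rw [hn]; exact hg))
      · exact h f (List.mem_cons_of_mem _ hf)

theorem or_false {Tr : ℕ → Prop} {F w : ℕ} (hF : ∀ i, F.testBit i = true → ¬ Tr i)
    (hw : ∀ i, w.testBit i = true → ¬ Tr i) : ∀ i, (F ||| w).testBit i = true → ¬ Tr i := by
  intro i hi
  rw [Nat.testBit_or, Bool.or_eq_true] at hi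
  exact hi.elim (hF i) (hw i)

theorem bits_false {w : ℕ} (hw : ¬ TruthG f0 f1 v0 v1 w) :
    ∀ i, (bits w).testBit i = true → ¬ TruthG f0 f1 v0 v1 i := by
  intro i hi
  rcases bits_test hi with rfl | rfl
  · exact hw
  · rwa [truth_rot]

theorem run_sound (H : Hyp f0 f1 v0 v1) {Good : Prop} {arr : ℕ → List ℕ}
    (harr : ∀ c, (∀ w ∈ arr c, ¬ TruthG f0 f1 v0 v1 w) → Good) :
    ∀ (s : List ℕ) (st : List Frame), run arr s st = true →
      ∀ f ∈ st, Claim (TruthG f0 f1 v0 v1) Good f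
  | [], st, h => by
    apply norm_sound
    simp only [run, List.isEmpty_iff] at h
    simp [h]
  | c :: s, st, h => by
    apply norm_sound
    unfold run at h
    split at h
    · next hn => simp [hn]
    · next w0 T F st' hn =>
      rw [hn]
      split at h
      · simp at h
      · next w ws =>
        simp only [force_eq] at h
        split_ifs at h with hc
        · have ih := run_sound H harr s _ h
          intro f hf
          rcases List.mem_cons.mp hf with rfl | hf
          · intro hT hF
            dsimp only at hT hF
            by_cases hw : TruthG f0 f1 v0 v1 w
            · left
              rcases ih _ List.mem_cons_self (by
                intro t ht
                rcases List.mem_cons.mp ht with rfl | ht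
                · exact hw
                · exact hT t ht) (or_false hF fun i hi => excl_sound H.i0 H.i1 hw hi) with hg | hg
              · exact hg
              · exact harr c hg
            · rcases ih (ws, T, F ||| bits w) (by simp) hT (or_false hF (bits_false hw)) with hg | hg
              · exact Or.inl hg
              · right
                intro x hx
                rcases List.mem_cons.mp hx with rfl | hx
                · exact hw
                · exact hg x hx
          · exact ih f (by simp [hf])
        · rw [Bool.and_eq_true] at h
          have ih := run_sound H harr s _ h.2
          intro f hf
          rcases List.mem_cons.mp hf with rfl | hf
          · intro hT hF
            dsimp only at hT hF
            by_cases hw : TruthG f0 f1 v0 v1 w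
            · exact (rule_sound H hw hT h.1).elim
            · rcases ih (ws, T, F ||| bits w) (by simp) hT (or_false hF (bits_false hw)) with hg | hg
              · exact Or.inl hg
              · right
                intro x hx
                rcases List.mem_cons.mp hx with rfl | hx
                · exact hw
                · exact hg x hx
          · exact ih f (by simp [hf])

theorem check_sound (H : Hyp f0 f1 v0 v1) {Good : Prop} {arr : ℕ → List ℕ} {F : ℕ}
    (harr : ∀ c, (∀ w ∈ arr c, ¬ TruthG f0 f1 v0 v1 w) → Good)
    (hF : ∀ i, F.testBit i = true → ¬ TruthG f0 f1 v0 v1 i) {s : List ℕ}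
    (h : check arr F s = true) : Good := by
  cases s with
  | nil => simp [check] at h
  | cons c s =>
    rcases run_sound H harr s _ h _ List.mem_cons_self (by simp) hF with hg | hg
    · exact hg
    · exact harr c hg

end Sound

def tag : Bool → List ℕ → List (Bool × ℕ)
  | _, [] => []
  | b, a :: l => (b, a) :: tag (!b) l

theorem fact4 : ∀ c < 24, ∀ d < 24, (tag false (seq4 c d)).Perm
    [(true, 0), (true, 1), (true, 2), (true, 3), (false, 0), (false, 1), (false, 2), (false, 3)] := by
  decide +kernel

theorem fact3a : ∀ c < 6, ∀ d < 6, ∀ a < 7,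
    (tag (a % 2 == 0) (backL c d a).reverse ++ tag true (frontL c d a)).Perm
      [(true, 0), (true, 1), (true, 2), (false, 0), (false, 1), (false, 2)] := by
  decide +kernel

theorem fact3b : ∀ c < 6, ∀ d < 6, ∀ a < 7,
    tag (a % 2 == 0) ((backL c d a).reverse ++ [4, 5, 5]) =
      tag (a % 2 == 0) (backL c d a).reverse ++ [(true, 4), (false, 5), (true, 5)] := by
  decide +kernel

def cert4 : List ℕ := [
113409851797133194828562461982559049605253929151961931339241543806864363723474169264286429916693237291256083587245636430017267623409875295316217458231512914526849972241408349771706213859512925859197630027209736454145,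
128432464449371939187647618736739859837296183908854092173636783404632273764047082559048232337144626893408254219250431343034823650170052090191140430857245030227719854483387396781158754936697554614555979229282238188861,
119699325646873857292626908063269696736593783784314531206937546846416061258049447199785233206120773231412991515647043694553072479569327975747218890603563959125636697021346090944385508887132119549193928208565237973194,
67813672046994657607888850388291182451334622027452729704373601374634652731327977588321169140997529690095162408816940952933097509378838799311079647701386913654067963225440943987189460510878664244290186544414737128575,
28934626413917229980786938673779571018310503952258003477301983706512793613208901816268676249979690275741139420297153737612991540856784944883755058028980815452194083465162583608895573977024580564285892248891031860,
70690846668653591588145834607319456922063477270600359235928886021976766945335947262797691122331898552658251750858820110489558726330294269491277679805115312397381947793362973955867400335342433761133178394251362422,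
72652668320962231078338081527474506973428163178419369865323386025654444298501693133891975781689784621636977842953990715025659362079400569929015260609252364821968608309990190160629239650804862295593850008240178404800,
285856496678268675719918644751532248107396231733201363782046563226054219894108153367019865862879043131079595272290784749075034661582128072717457586908057546674468581723910987552684865548879356403561945637481498869203,
35511045486501164031759419977778923959828359464576135636140120415655746796258958038712443674882077969403172354545700501842919601583748934289340393575354383297898453833085073523381533142189324819439486057593176280,
149998707432070005003941491029884145040001991366083028635996712323847030946181180141368515513107732538992065085544311073728925196515033652314111561647870712337307977341033017471972261058762242324758537650513431757162,
169968150489491579774319185909670223428311643430112168612040291046922742811433415996859023544018991844989047510572592603450413892211892739649771354547846604125379783944192336762135690710292624857262656871964082737,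
193028249787364231973391420567157599507128237188582582196776491936896880247192094534082640019594636301473831908542268254190656167631519820342227399652244269602765675008660311595594237567080510078158157394695143031092,
175377868706067411077294563523537447837874698383829344471969995334976387797373419634056123003410594824915671540301153174293879445862166018838928204253920650275470601580585935928091824307826188068067547456307865515399,
124604681246646147556970003854433221550590045178378304757482752093212671243790196174673156308198863630199054047340816645560391363253008077668633330775277856299670520437374427558603477152218941711442823681687945591,
123956177890715300137834943065487307547368039801956401087129015921237915734842869430081180386841157605986442096524810973773926529378261634112585491694085723170558041412870068575711358567057992569919226891582046705,
324339670263128544258784236087541268833471357907404185006329691336669674011363006814014722079327433720222794344913563394537603983199290887413121963120159763667408383732358587119572180222434367485398554529763963436739,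
43077581255798812615067563956441521805696057219735110151210140665374255733341072323227900125831991067445248770227236919743760693292298164655457580448359420745293105610759773663877886635787734882359035833203294653,
70363260829944224630565002330809396793937325911308474048800888350578482048952772805945160134642650168622601185770234173254036950519162098901631120197328467518516765516049004883354787100415770823552039639196893201,
28047046061762490009977561460481141710132365565917327512442098826342074770491819600130062850229079164589336125056577304431452462887852062414418695564372069218640096207088763881459473604228846838054988324506558396360,
350786956736912188388942535838884103548406774391820282396022795366402529122398516620039518497754109108367872029310009211199401448043497662503508507201609108383965529494267220827632044133679035164796706292380656028992,
215519274436974896455628973978863682638038175318175059288690818440939391826980554170566269060111101903134955301366375073873542912690310035492962188840557480052425677059885277127203668291833363692555118649693934977245,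
155508083857692688864913060045997092813106755129467561041407059888196950595779527664828949647111818521330637487085049562022548578816825476645595235706707068633007833516998422650084617746126687738465088266523639994,
172134003827583537668506693856749576538486315594330565409888049984434509162033009995659868714338565161266018725438899383491334867278199680696621205962320412396600965476942061926200258540219483844578009969518298920705,
46354958547107708259587445823013686267047112398495210342073175893571938988186503633271056788558527367948988052189208960713860042008171937927258764308968462691842432825889507338111376298132268782701286790476595394,
108161547904807188038558388415448687561502127887470963404614810638245301581559690477767961047872684593513915053724075515873429712677224915917186680121598155277328699486114237910005327089162621351321234995039906943,
110737696036879838110919788131714552337518836965876746407620611566697966951517776528133429235807047619472095627004794982867112894729421354058946527746056456567901237558342670851763983754008887974397961539238513290367,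
172218164455665997343212906527404567435350372379779307958378996335064259304977856624470946956824333715546921407435843968559544020332747738505426818938667905459331906381844141783105917787803479720193126793170349653188,
72484361003218096762198175822460203464277842000361582486936920928164282177908515312138518325069132588137042020439378055068727930561752875558520425190152435953676743326454027175211873236751765676074506914511586328831,
3092631151910543225650828949729526179957412060963747919688939452731815707893846026277258417156737506365313265428036472449888612285177596217755390823181518250395901526332163080712822165594614450163197990388627625088,
238178953624736719508078216047698510187269265698080001383747497865153343158402454854768182452551903679817436124692466139301698214816037655690353372477118296332158605315317911630421497056515464486771316587005160194123,
43616065871075354726540291212482108959440682565852972299322820971390200665637156100629674575587285496069130774089758735561621102269977396519937450419944211674407560919254657866963063628395086832713803552489994191018,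
149977338128932083416710114394766070772214547614043642657062122125244427059142382297173288816917748795617367845615224314069855906048385759373361568338336785074096264713280394393577839581499890060960599036130809086067,
28025361072956918525499178584358903977013670341417079389095202110702142195810451454509056996396962931445797257578649239375595601731866971143330594596961503497946322452814402028313150562930579936079480352486807768895,
54573921070573417675400369218596095707206392758443421283000749386569275033813884590766280743260814695912997307511837862630433994095436953663216366013501543761992877335319981828375068419521120337725680426070653892,
26889814739532020230570135754754387740935517967330627035659450194658962645271861077100223305492793358921779068024030309607189163327536054842766864585589507901125744574349738100420861936911027075961372126929475338253,
32883772995929139624717523324958773188035278813155588154997959076395176589158892014488649008267012638100491957201534256344520048492879991474881624055401451828427234835899324953891937170149332199180535775916720622,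
34519644244566450627538061682808606191096045892897508151242699236625643961668211106565671422138360521112106080937539143222421057612769943736192420258961956756233896233074615303495892246652006030322781305769558493,
101589205115340612606819679118501950675998936795882824513197395231350872300838685184852915574189631188326373630371017784766961863886470230387140622372843256505371988645448627962810321014043998253164796824113906128,
95351780792385971192205762988942082399864367208309957673476697644589098566631395549430459503690781693890318676267915418686126925099877505664994285366257041218542805083072227163107881222340360981800903910504068548,
65432671162583817728459587722254965680855886919759640741975639591796068319091172615630393175401989457363586209910799572860637707322989482782330067903115711576069516307585588598541683810102418260612503744427850824,
93038922139060685902184287931605497231229484733604499782167998051959294014741617522543152893339201255807511470572241348864749269673692913490563247352352483779388659958774945712378644199406299085102740544181370959,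
197575650270597244356864018187781147852363790638219604040153715870805711413319073891658677146442118897859246529468852980369609017207030349864153133273971437077710507234341691202753227060598702544819396482931860963458,
104873964514691503046039083739690958104360593366363090403365221363319658248901534154608172934827844527778542354486415966710440248876343698071243247392278142197079935493547340563007397413546123076716045911342448687,
23438852260693517255108608504138267522588339925580175015921902893476896209194209539100253638344321358620405105041435240088365213923238482473479010894856984976038030799113457412930239370772898650106405335313924551692,
281739129352806161517727458195460138700964433655540114626079902877502409820240872377039406854315514283750797576166480221255639407238209765610528323406926819976612433495567329794345708854122946844589787536774664290328,
4940514863729237034667865177587326316198854624280379927275868965685100474717221111426179447683661111586845151841728778144221534150153801691052590806881597409150357536620519027997500362419388493372811132331983811,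
97979011975583460250785301680860072409765749434363627546754353309718703175347758817126057688906647126156453275969357039606010055127434750203421023487874462979905984534783692220396694807594508783987757762343862374,
257662825762192861386069901876715260869211754291440102851281227750079611249312452343679925261286160517385104749951278586855140428617229838271828770987372939692592714338055720321839814238211115389994249321292301860932,
74967191723432147390967751027271088801072009285321948129275223403897683404764794818662348055773589234609494832217079858844460116359950303081616873046923672490121924027338375949277337104850731990196685583390930305,
60162815406245172079753342699020933284899768930440004226466484199375961996014857369171200061632691894511074101854760310432467254656795590123561152313073162063218937456290568199161708446090628765486726884138223102,
12492825823773440260011271728265295069639459324986141819201964881829473440090939338942385367046673443619341122868010543395843814313044958206432043171659143484798644983281989081611271848931294985072654812654752896,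
38147577044510261550896131895857838323593932532000147755229315849657683181559346417138366881842190341989843340934123777852151348810999106854070802533552542864788925821017987049924433996345017317495089554425643344,
199085302768134548352938184649596011514428598049514032314862906062147478272879339334890488375566485742128603452987069060385212885652351546483746682238217181529962715240851108770900797840273197257555219402105437625792,
285795018841546613091513251305235421084720873861296858603819180960589934158949556833932743271123423047099855731227556602710813146461690575958566036077839035594260509692740778684040838017281447908964289052020641821892,
77922490090438821929754068892004143747010790693105171730053897166172141426324793278665724042296143350813438536144320060712167324790849671967850680194093399093933749380397387054486045980934388258514790069052243591,
281942959448471062139434776259731127394472960045381104721648092693431284964867275920365081508201064155555820477407240823464866821400946401694968858377481532603040292605067234086684838834185672010842657598070696774847,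
259113981196174917270147105963781524719795517395756320753761120303571686979035368992156487867941875282302748766660980438468309999627984038929796703038539996117331670658845422578701294211261713035496339820089167854470,
10858051101682328596086628795499968647729876404079754936570739796010172704807615197300151983010503138243977884085008012742590603494902814923989301927673551433815770013038960415101987543747605899367425866091987520,
57861500893670159916675644325260580873043747374638436557473753417806811952657543204415065132612257766069827553721499903983040188567652935082292542733126674065165597464248833972413947563717214267791212752490463553,
125600143133765688798675465395895418782312243068012003500193209298906279250028812453241850338232875085347030085744934329384781998412282083924089589409370666679084602770495352257032617275970117360027272529622073525,
66409226085199386237205134498433165985467787735725173269071943271955598365643732911107671005789500807918080343701293426939336021020984618974839909435651001236888805925200437248463739614543788920359683598432862217,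
7241744077397874725794197635786725765994092443824592928329718214511879621528916571333482105081790480324063163273710650329416457056058196327348528767014170972816914616473697852041013702076748105653881054930507072,
92282851090479582418349686274451795556556196214689019086789404147185237808544402910816707926959075990446867235495091701031310429003316395644320496788097180693870044444904429379505608916003777838486699299623032456511,
144655326235679545841407348623617762861525329077284788517904477771287332589843609061217107250935094635797348029106313148814902816034400592018946074798508123575090528409509735883093071101815421718589928040187298066,
172029785839906719210284776368485731081402961624193848785615190502037790415453747872865079922103698962048287948345644376724413373658147771042365572057528648308755942007180579235410256682814786827302495397563770863847,
304751233593027557886265573015669683731314882198372376216555202444254922882351066265269142014178671122473534809031698749611426462938133284460917659374553505779579073680647980821799959520725860675612993630085293539470,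
132323321228398614662419783042859353836773955478573496816654438840606614605755767644008489351323158591956884839518959145393543500412806146987864602700056421688035623436041348019065062682859403964940714569489253924993,
97312515688270755689163407912316559404409167694567970517789034407220281517934508718534581505341393908563109240150221489051555791000871177186161998648939080008284643753454031045016260753205938216834320562848268577,
103887688601744173152954694984735036023256920120853072679698923891958260560926253880103818238069115434415492298630716815888495513212333308612716076443536704884401658324825967882425986342846369634298926158068056163,
119358982706933438172310224724363218889964640005687028871946883695969077118509731683163685335027334019562195030502863273102777654879337864420245713597386708171580895678428989551082156277271356689122535373692931711,
159970938390746547865804809402992059490384443610289331786046443836548016997678050799461844209905195073412524573603554504925842431157149733899377577928672940168050115164507046179733212475336188972530571829712884072566,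
99285070550092748297619588743620341698067879844907336605414424783757864690227825074152905399837347632619223404375738509202194741518377218557160169668827263879415124288830721812084382392833519354129379641929835584,
71726888511022603219436395965602892547247588776945239091755431208607352562216931656661325193484541904769193469334218573894270473973008851554870999472193009427561531590664942627818874788098356121720380767074489729206,
174761768919442803263067456347296230185063519578008296580822962945659542212557962465009749489049878562017556792872757206427603232350653300593425459067025523418732173312831639866133452329738253478140924130568131918803,
280074292290039672866501810139836674912192393570972578596355827213322272682729093327423264828688852211705507541423039132526380282796570660333224615729115358435243589041460604079232709780785695063952011518386416648208,
281353820348737967857549060823124436234375941942615530021295255512278936969880800329654545039385763587146794455013234253431048971622670016126577563386562996416212641294362141439837350274893720235951583145765127388355,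
36182876932846513525292780977369636039195895941030569703162497261190156181686715601881409998496277597175789831948576520475135723800350658174552714736378083326735392014107601170731173003661919774420445946264227583,
44382397041934895694862258872321382688835325856022843851014327765822297200025792311601769368601340680840906290913739293962856328173013298001513522896437323013993936728560279174467023893341971190595439333926190399,
65246409874143412108580748032276448026193636851342644068009794802019091798876809217137343628534626426948993210179585956747348823620807667162905391171183959653440978568069579980040596922360760306519192132825003746877,
171283182505325157302355213494645684791209475019501426916015871461871663289875037449678813014279047063726099056431603485429942841254303882955492372250331851752585833906670081331636672867086124570812964821474150207,
7806041685951550591173988250712785980269371312890975949073860893438212259149519107132343086748092745817357692622028995883702061413449707196996110896753936255939006682163908192536533896310976038498999106677879341351,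
86581188479692025331059736040827755949719034784825209110608145554827245065214911712154205477177504492655282821867954267527257846458954191267369667632687659244656844879381981979294784199099847408877439520789179138299,
32875850795555870393090570879313930368006824670549847242908414106162443270009809559500914713619367997092823812858847847466679255835523441513825908096557745679123420811896556585554063757955707944817943132571172959,
33210970137003700287496083080927145586452459771241989350790354409915433850266304744659511542126494966479855898077725357096978892248209142057268491873820042068951597099311922526522777572419684145955414353469713472,
88011607631851968609156398871296292505465501024945133861412243590203920060631328611448727513361616285511604971858490819476145636440843054352718614902257137955160670788466191100087937174688680974837322398408123026688,
172091593870242315189579055998409227661204744421394751273393624604956464663326646470481553878556362381853505967211040555365378738019972674995764031783389969757154497200232544726005864303832447864506490338104832232703,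
54573918071844396388235646315979123355828571111590501310921503079667926044887755169735088921809956283228312383873439333182745892797787862828073866414651814913237777219605451584541176568953966565164306542358429792,
201612134508166889595972158167021086186418350907771736738815645604807556182604253472154569468994237254927007577748507638851438297634442341438242488538674707814493768037105232280383063744194305081980106572677641678270,
326870433825469577622629424944291804304890943698200919216928439734587846189713272982058931895997565764130162843813308989476643518870529310168304468379154133831008422007549176610204352250341935672280664419524180705393,
108501938621408416584197567305576726597992097033902446371266886303405683807136621062568930081433377452935459203317096708999408032218031784360730445353421168695437226173911560322682830901920566130700190631547989567,
9545653625900946247484339739318841515706737030535239654142539239940712412278626681962373242241633113965732517074999242083619225093911001965377444510738254646036937288559464671017602043128831896365180151457120382,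
91273878169585849314450834238975274424118036649117798912096080847725945463958371875994313136235538362506978343330217631019760422692511304917502367181072341975252595528842682627921915359748516145434566971002632604927,
107510867465537852556915791232401171463432211642586559174843814836526922389223063519829454740795422725228529424352431506741964258258649898674684303051880348632801168571917805670676167318360003092818064919402658944,
112440968106675157232471486622499608355225619401391677838675775404049858571798232366750158131826596565912274055439757131426272474839538685401542535279382338128284293262854956626212912073640954918275307857114123520,
9619108271972646536231065681019757943836217638759848234221482819301295689621790913114572306223741850415533913121189319581877407689213541974840976170701525253151233878993810]

def cert3 : List ℕ := [
73313146636058789104998106290434386422757053889235413886319648626325700346135802481411044137022728741297279460435022437999299779700327580052964823430906913947274998823153596037581317202578701589472509822714773697,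
324851199148834917114523525449927087468383884401191435858838485366401466711232308340324509195018034778040639802038614743483498530142987256060388510678445317577253973682633961842123744126798065580808886292610365467773,
35834678180762409775970720347884416570401155014123847031293380517584844921590347558660043546529683026128598989809524067582766740479043132655517205760363704576802598169845073950502026579588477906211976017180885045,
15451650974396555091364148805903686982889834846165695398531407035513861223740078149211167171329543163696835622831429256521221303691174163155524016382183201629414148198323270219732049966926322144564333769075467453,
386835983095967594530099112058578743295058767441865005254864010878467185055482951279893295986104050863632022121304171583647493349293274618612099063137168769130347763198682451886106704464211442924498676992645657526507,
45697434054712918995345608817254426052674112882635942391975227009669521105832220333161901272290476679716307105146099657516849104999427261728725863426006940125814908003036843049398042665415333347346549713050356799,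
41427491800379342697428830245798237046205362716755172182221722049256688268486460941892314794776041990667171794293673854498097717176948124084494145416316500162141624228947406287515544943063001650122311314746376265,
26641226674387433627439340394199574824773050905419193991733708958313305304202194355759991938194693424206151782898458286267830294299601235776205749570792865012062026418369864925288796548687184318386449868959642753,
214448857321556693119027003397215552141048402728757059156437086773498449353921328312418373836067456008978761894664685366326409933166515310428668347709920489462714461255870621454757539928248968991445244863218157694399,
22026821087018055595834347985591971437675347799626946050673540309625775304562158078065853265208482505160602057061716665671166968231798699922363418737196550460293808162421585474023457857689829984704220765574135878,
324276858059633927266639514149023169167496349798737768966179787035723698987011968952753701404209868492495423557231244019150773635035771347908060034934173067839733622875169872754475177678418215337940701347505277763794,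
23023308172791755121865471941032727953911267328657261819550591423300934321562527467332878092278976566312175767433173973828164507902136443348620398623162939622717052702563076567368345991526906487066235061317664883,
281290375035942359644928597496577948513816520828546325970356712524461163718017010565426623786385648451065392313538032873950254460876806949184694694191590058257292118550672017773970242851293723734492899348062673043585,
243439089525344426308968682851393722084997758696888975979651422172954411632098163668233893618585091358871880137778551929651570611451262923913323586159760448866142834105730230048263005287512157764183909561391218950243,
114165660852670349751894670254527672310127269506651671409830220010053661901616465042598131282914190890237298210862440486210488407976982997236610084010637775756297213945673117439217005698121705461628735341084034202948,
44053640939284145349946950804575490172869265037240127408663921490698544748926321198831404382462068917419458143640291268197532504163198311299204870019000578067065444470616582760662406529872825524486109992433021969,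
14465375963148863565355363352288449891596604178928758805299716536790680728540548534163897822737186874751148189961547283197132712197402091381120483792311476760061670794168598947767213613774589796746298780146544061,
328886052143914343945308362228150784785103659040678772813444535903823055706856178282328025100715364709945963454234273426499453800936987623121587267690029070867930024516087511626110978241963567166252824190543806985928,
21369304451504444534244500928156251914570067926036365882311341111697808896680371724753985684613411002392651539317880661882525749179565242286927308159704243622592679656358589204294671551940967324637574738617565391,
68381767503950307937726358180974251014758550826806718890913157472069237830827216199288968333384183698810569322221433663235356144352538320422214857733784458400130547299784587642711454853508996808881355451305366409,
69039287881825791180916963432855048272558830299740375694225645627341970613679684358864365106707848034492560326053897020179333604302339015340884834989816129277536500444194924485702729975551995188627957239402681291,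
108295037590385222245508641372987384670076908576652914319702896349283351272998187441042377026744848387083230813467472465638137423918738284000556101960089522803429709282423273639964900009983152780118215444032437354744,
39779780343214570282139396411712417569916685491946708158700363845293460998766213072549058109986019316226199442402043874630248870042451547873478368695062080637256800164910109620866915414140958697038692486310743423,
24328130935316479293227750769078641094669372520400107948881534235341693358764478346837318793253902002866937534620389745163925838346664372617499840645149802953917937156685486328523647858111539104994850883952967772,
24328130935316479293227752422610804636332772046718507719859693546405105617418934255269555531827234435721412469346840191458218389380205678909327186708574590016122436580171000954219955587188295095877201496956207320,
21040545409440709613297326031004636838213735672262603613939135814356668105482587269570995944828904634427916056237695037300969622491435948426253272708243654402122889041676375662329554657384254115872128843133223128,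
131060575617924358346655338340603065992503997292658519747583237803982541532228278611485128894446749238857060242519442216600510230383152474957438022347187983869602351940431282323328915229250897566609205821651778870655,
314113953962046604836624095451037777217025271223229382970020026155396068301967390281545718349713220819521311447875815388271958713275335257536885988196366412088018515355091191342153404585067358905365830379178238672966,
280658825238665836928910445080862931311025882802609166698355086267982377046276447207775453493830283952864389207879184925585495009719699135741180683590364097320927989951935960053093120033998830990956496509584015360185,
61806600762300294192624183603700660339635965529820692845239139968323481828459425248844776627572214144955761256221542568447575021476103950595349664215973522281796803266030487211491064424864930582393958825036087464,
61828862385413599439960210222487185286965243616203465613980892818307433447465570023147365539491070513204634488381066112988629607209586358165960003371410844489537307131914482106972380527526568017585976043259646916,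
387534923654866834978798742001761593491537329460383406318713502141195233568073044498707535090345535398829908657681728515272143292236202786892510183248531020957690776585413930248071766161174920225644177816483091123840,
11424044663094775129175403442679883890360451621533267942877910261849510293266905434562821263005973800351737487719896574274770940084009694755611952740248094686050310168399833894960874331398209134413221907968091488304,
65329909847425034738769578619670925236646957859103704486760353988539049024010770142478726169780727264660045197511033708550195945161997354380218407210285773870661736485542389461819879224925258939512356826008732763709,
46355142020184376802339523860865454889199916483397777557479741612448139541267575127642140917342980652935905702746243321859719243072157301472095891413177678380971187470686470734995449129733689212288766930554192030,
3945102514493347741005937579782266288662181572979929046211225844523695641107686468168324054152044141232619811519820719323196523675701867991079670191198718842473348734934895111531907383103698033575223240706761665,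
5869325393801325467753673216623764929358565657716842890385545404023187750218656930202426577666409278247294754723949262956198662997495276901072348594262735401355637696269455602835889295389874263717775850446753573055,
129000894253272893627983516378733534734199818349711912204036870614182269261846079658595464029861572970639695648371968314098638084414628921123550953182236316184219591811231693155124091693795711056590165259483764228223,
25314408553840169466937916462620632894251437702246350337492835544641325942698708634801458612199411702051035981616271120906262646801247638725466876302355817539753212985634160212903578524038460774855711335657767006,
158603627156998851549619172158082449543690139572110746702246168398470199014775866535332200435456274678365623290873436447627621378194353595499852072722207836494995826608889351946136916999384991159686626359932877087684,
307507544808066083466753562442052940367633656988016637361526834032519525147973438248947439817860432492522930512422532061063372606895204540172057768710373110298137705209920380325802216460412757009500836778507715477755,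
75943216155397544350896441815711320800098866604444512879320773534419465485393063533919287004952113090388839390698579331240541999839927172432860666411628618136520031309814806459292656914216106730863639388634480846,
121024885277975996952597924227864809329326055395980034571779561089177315180438494280791085006637047885585145584243164389452843806974110956184430316363825621469388890709230043642396441304031750464867164099058541265111,
76929488794663723850885369017362496594341597872656764393049435655613296161646701814641166517956778896494551852726334360187710419509635682964953068357281379609704461754065645502507638909628286828625344796236447835,
18739238813003182746872390122071678482635072244691406361061355603753069918860266744468603627451558113790783709015506033198807271991226928873128451683288265217256181047867824335962561835646337728396230434121318495,
78246432806470800373732138427487618286038020103686120820850092371730496738818552313179636009752619908440749848595462263648611668703668726515023468049984655406047265921470696909370544488582989971797982405428510954,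
72663313762389069144320249259860426608026244767258468277774840129823918987842364436029546475117381149133097732355038005270741389991053904879142045105728548563482975098036855791822473130740711402289747321230983225,
175540597791346596214335164270847264540747222186595465120525377800502572898236971411139877625348145201252153145044847018782224391203002781941187995137524572502481491826611877266892321895914452674151403650305885862923,
22691273834780889295087876328118131015235966697642994553868761770036674126452153836090432693036846885981454440064606057648148576890695828678966682739517706690041352130649462101515249851397626090054361068702007472,
20066365329122959487147989137462995414478318703406092428773522137876495322418506627590263962626383664732299155596479111766443880077448796677903132592454518430885866561916671376149688792949070302914620308278214704,
241357400976721674046671816042197741330082441195682343917706381755673962000258822072260899923450781201886252413353842104745239574635755232587347981782789666312259175358065019655808190268301219747835498049218577170623,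
284449739082647634896188841801354900802391377130454223586761735442157529394460446030426807995238608096972271929788654154689969892149723307411710398565866382248955861232191520672673407585324865686965977217671068909753,
48918938041662586824606334774190468231534372898065441656780329782472235340826704091719394318389947322187274282021674276083126163952510136553692158449673171800780859619220869821289775729459086289048029066699720360030,
34852323197153363717461127721160238609141528678611675665163831249084058901198219873103698303539666235588873896744378452185361457677164991663781214642345082036614478521515935824130604872245174730807608417657553102,
41094814298932041613684723861173417145239869199614707622139720956283180151591125018625798664312682462415747319090815213899805646149334843262692555337961161132471011524996648315249708570376578447275662590341021842,
171355832353487787609011480519148619920020329333244890442316079059745377429878384422661138347239210188618859786141560544102057133273534547907726542170449912771279248810249763432063959173144148591086410598886248808627,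
13807859191006320377453940836366016391269491727914892053652421730396578168686201966141247568236642087689753813420781784005732970368286140862326990746675227136082536710653029550385656237896480003182010544743776462,
238220048437485968489119421548524773384908347309762552144875810575323495688099880431032864367395047497283140551343460640183322053072899996443994386992412657817671239369911656587256063120969752580195002768026014580866,
36501335289930922942041566069871994210910320628039755348623934552492122240105434026598619423020685983108466848589570075593325479867427751778530891852025967035362337114497608888849818965412740255624679674113363583,
36820953642707293550533348956534897680071546582756928586528729404861657903625476328786317895517197057989041907801303752641008056392074375973048764656910719673737561874464536915544809909874276713064281913673384037,
68710527507223445804692250989252889622841904899251905815057745077154940084756497826928855994413548469904315326237447961774844163116020192029677199677506773061808236301689578887354419906405519812660246679931322475,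
51943843282768969223828970075481718562379223635791734142692546130609898514055016746106420355204586569655665423464621549205333847352528659210173643546563414437647000105668812509669643559467288901958689812939538543,
41094814827190816594075133808988253707402869232841170231263723583721045363197730512970811330559012891732665196106203792906587667484100374573211629916086496585646939641948634581107900119632523312581573286677184606,
301410389779497232538566798465847100993731971635292286427063728805012691900676452487947053422901742850408581898084659563080464654223086843765173507056287208282296187173383343175417118665370058561186116713559822958634,
52286957620168984896768318841808458324733087061688094556252626351196873410883303871775280149853657008213608888180177626913953649748932718573229130986469902481551201904259912842126266010429622535696814964299792563,
50639271067782648258144617802958989210678291507909626318026455286692566983577735663904398457608939622888337247785199881520961525921644094047678517086659644387397087909346010144371923699932572345092176826612315395,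
23013096136916923150845747874012775529180957788878957291840941620961895268682442290547856067399954561195896865614999640321428145600685805670927749526741715584951975538684941365810899240164735752377511369804611640,
282552822217477873250836822048296200608296681776474041386997830243354589435620624264347082910900708234893134373741347078809492649839983913979903586605510496918305402705544883688569113572283840849573142820175468298427,
157508523164911546583560672428725984963082245622240758295814751019364926593917101486331966805965473125350019784349682166214094658967967105021297529253680691439526668381352842653897024040058207204796670214644968062788,
63121634365372123995391072599723136305760087491413465300882020620128730873752255715659950557187184596529607548411169539299694927048075520658507369799393461108873755120279686960379734441967599762338020987305459870,
152080738600381763641796093617700668053426440984007654298571021904594892765460250652459693748227023105543975313134153819013181395001176715303770575696911417688869798104740196235614009844836614186423248839781033967823,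
179580721624212107759267174087967881564380625994056493819871568307344737517627280039067999435496098425462766966038179031783871116709343855887840180961694139779876315514347850510642001244101103495128673386554770587763,
216065026411985692550403215003281445448902213296221746192122285246444829918568986115578784385794550552526781037321419820214660543412135373278765557467870040940071407903291914917428577995227091528426116378515126353966,
129713965060130568791108988007094992827291197604405354766014844482515677029801673553009926932250889632189744043164568435708233419983913671595008806291372431886832760254482436443282512207322962546996582169303389831268,
129819833029585043538184324964031957589657644969846030162107382259537065418388014022135766226989984027778314060553818695838631406064193605782595916327888409938785326892379334719847497597880331504598278439299285649023,
129798793957133563487824555988584358332694738057015825207707491314518590741112112902824199272897980496466357372621180144280277636545056185678065209546250090033667464456438059663399790282813149932254384861298288492711,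
218505729615781207632009066125831260940131419597683688684960944626302012072201070885835677667009509375650593302556132457756481927464524692911886369765027159505523308350251356501393972821977950723152868291981653444159,
136974267637909845643286674870124955742430990181755622716472071164425686522160549189363297744328305350620839935820254411322238502757370248412929737136514452186864181010181356458453391221693142167583367298779372463167,
238665540661965532724267506450366507076362076010218738642649850147893990798514952314042931454376907120083101021434425952938549693215890464239479513296839729353838709908393413406490952049616408730819687253135643901970,
30903301125780343804766337411915266712792573525308446680311711420439973335571045840387960941715665548904141873204428149950935248083369101723710764307924973947051436043353275601030958603819379000713950868250034321,
197338272209986803110376141125536817461547944197594366966633608547795927235378875592545510662845383531033786954893148025432129544837328580001339128104479157566320445355226228097757248145264116929998800134309520417732,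
49971294983816379091184584662235339810540678662893117269474068416650330206779541130938993762422425704948404384471958260930640099277738831217117498212253732318003950031995464189450012281259431531090776309154971725,
36820953407560918002433981110094645612128244782639415641174233361285815876950893759417703270276842837492623640029652470758062901465534663633484465022247432859093749694632578717927287923525139775362008851083690060,
322259284135109640284073025798998225672951474762520127701162878319640197255344008602263553734362950589741407503916908586517569670369967247837142178801604734741242231058753707983602352036121315688140807038214648889529,
80545835577814481701874560607962731623077212875020752446801595589939161586298380435028089111928476534941516464562960725332411410351036800963057960565151536218457569171275735837096287241023514661655315506161254501,
37149711097990815505404016784467022866726315410492661839198303325107247587818889362316698514979910146060656270266374044996806739447691446472528374116489145002043202837745019009482516192646113646050481817372283848,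
63779149079983843720206905296923008582133626112699956809088901010512714882886150093742611929444414279478763870852802660630252692033829803186776106465054937809546808863562593580993026713521478698459990727533265108,
71159118478360692186179629516435543547996346687966906424850333467090376362625287022661348689753689907926306904550767686903282313338833174764804620780542987674226035704149294842808717105580952017688839860564764359807,
291916190633394499464831317709810291054810135473785065061086550308078117992005906826507391035147049972804739051461737731087198891145762098064003482999962610871852268414653678022596425048046430502762484613466793842238,
29259510616099795443094024159931996351026629367531491715365933258594336283971218604542362252491858093822630920550719183691255656829895880093214756701360389509690949416265925285148874396958719707333150713191596079,
93314810894271563111495976105817811707929938571658452428383064538743343537782507482610856382092565745222880883777539490710339361592198632633105324555429815363339838146489989249495701488128772377540399028425956786352,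
29259509029726714021183005199767801645995008467412833194179935504075051670999788212444588878033878614844988034815174938471925769203279851652206154317858526326186230063632111986002310379860112576508458038165001406,
27622168389349378243289972540142857023163831161401711233693154602879186707326896163202389001227540099843265195207479558038330353303842516702055703884578635721259106177407115227109144993136976571705682738458656856,
85425593321311184366767894391257353968543982502262783958163132412869768559999582511014256451853241063785121856618499024517018535400893838037288144959197429045156002435262282466893356396138851502465009904611760741251,
21702171620726519872678674507376852456167043118999072595593453484799392620759990535072113524607925734383946696816201133322924718582237874478022842336959052935555137548375191262811687603312918695015579487475597533,
45039917987620847360048041266721114810228593413455722385795207684701121518848203419489615644541417968591666999300769255817450570005538092512306712822817048453115335593054504184836774685735751041472172224391352319,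
29372598878165685000072405052497657826429930285558662014640955333537667305646535669035621968459105244833027696426326592938046172969319348206776874195496392483730697126889145797342678840872242187389727494492829777980,
42420103184676938359473432844338437272716664509264708821975614466149263974857847799018226420843908592982508833964913406628923039831253448009821986795834286016184495984608343504432005886071922872912639394683289839,
68592172160345043822501280608195982780810494281307208852334819047138728814369462116096750914468603472279468741982896126389957169556947264726435568460570440013359656091973571028107853617424247766991168404217573408951,
380707924773074085095524642388831355499087812557642005535234520595124851004647726501092234451374982299003444635439676376967478721248724844432085292460145092016043620197758642884237704546237947094119148402801696255744,
30909869980016637963788472454888238617475674352977461018375812387684097963398579424169837705426091006167624279700225277937371425989864399627128567137009067474070114595668078887479180149933638023024230359022434569,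
17424204092985919588931542336198226697743339059943579318013687073991096446763085112323578664822596890974130839137910904705891956479737188532923498045403141983867284340110928728713576309053591449367030208127251400,
259516694910641449515241743632774723070657413323393443214146216079266448807124495313836624696453509423011095459608293862134038619438160273878644627567006862258121958134909752566115385491927480432051061067637729145919,
59403263309253526]

theorem ok4 : check arr4 0 (cert4.flatMap (dec 31)) = true := by decide +kernel
theorem ok3 : check arr3 F3 (cert3.flatMap (dec 31)) = true := by decide +kernel

section Grp
variable {G : Type*} [Group G]

/-- All nonempty windows of length at most four have nontrivial product. -/
def Wk : List G → Prop
  | [] => True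
  | a :: l => (∀ k, 1 ≤ k → k ≤ 4 → k ≤ (a :: l).length → ((a :: l).take k).prod ≠ 1) ∧ Wk l

theorem Wk.glue {s v : List G} (hs : 3 ≤ s.length) (h2 : Wk (s ++ v)) :
    ∀ u : List G, Wk (u ++ s) → Wk (u ++ (s ++ v))
  | [], _ => h2
  | a :: u, h => by
    refine ⟨fun k hk1 hk4 hk => ?_, Wk.glue hs h2 u h.2⟩
    have := h.1 k hk1 hk4 (by simp; omega)
    have e : List.take k (a :: (u ++ (s ++ v))) = List.take k (a :: (u ++ s)) := by
      rw [← List.append_assoc, ← List.cons_append, ← List.cons_append,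
        List.take_append_of_le_length]
      simp; omega
    change (List.take k (a :: (u ++ (s ++ v)))).prod ≠ 1
    rw [e]; exact this

theorem Wk.drop {l : List G} (h : Wk l) (i : ℕ) : Wk (l.drop i) := by
  induction i generalizing l with
  | zero => simpa
  | succ n ih =>
    cases l with
    | nil => simpa using h
    | cons a l => exact ih h.2

theorem Wk.weak {l : List G} (h : Wk l) : ∀ i j : ℕ, i < j → j ≤ l.length → j - i ≤ 4 →
    (l.take i).prod ≠ (l.take j).prod := by
  intro i j hij hj h4 he
  have e : l.take j = l.take i ++ (l.drop i).take (j - i) := by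
    rw [← List.take_add]; congr 1; omega
  rw [e, List.prod_append] at he
  have h1 : ((l.drop i).take (j - i)).prod = 1 := by
    simpa using he.symm
  have hd := h.drop i
  have hl : (l.drop i).length = l.length - i := by simp
  rcases hdl : l.drop i with _ | ⟨a, t⟩
  · rw [hdl] at hl; simp at hl; omega
  · rw [hdl] at hd h1 hl
    exact hd.1 (j - i) (by omega) h4 (by omega) h1

theorem Wk.cons3 {a b c d : G} {t : List G} (h : Wk (b :: c :: d :: t)) (h1 : a ≠ 1)
    (h2 : a * b ≠ 1) (h3 : a * b * c ≠ 1) (h4 : a * b * c * d ≠ 1) : Wk (a :: b :: c :: d :: t) := by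
  refine ⟨fun k hk1 hk4 hk => ?_, h⟩
  interval_cases k
  · simpa using h1
  · simpa using h2
  · simpa [mul_assoc] using h3
  · simpa [mul_assoc] using h4

theorem Wk.cons2 {a b c : G} (h : Wk [b, c]) (h1 : a ≠ 1)
    (h2 : a * b ≠ 1) (h3 : a * b * c ≠ 1) : Wk [a, b, c] := by
  refine ⟨fun k hk1 hk4 hk => ?_, h⟩
  simp at hk
  interval_cases k
  · simpa using h1
  · simpa using h2
  · simpa [mul_assoc] using h3

theorem wk2 {a b : G} (h1 : a ≠ 1) (h2 : a * b ≠ 1) (h3 : b ≠ 1) : Wk [a, b] := by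
  refine ⟨fun k hk1 hk4 hk => ?_, fun k hk1 hk4 hk => ?_, trivial⟩
  · simp at hk
    interval_cases k
    · simpa using h1
    · simpa using h2
  · simp at hk
    interval_cases k
    simpa using h3

theorem wk1 {a : G} (h1 : a ≠ 1) : Wk [a] := by
  refine ⟨fun k hk1 hk4 hk => ?_, trivial⟩
  simp at hk
  interval_cases k
  simpa using h1

variable (π : G →* Multiplicative (ZMod 2))

theorem z2 : ∀ {x y : Multiplicative (ZMod 2)}, x ≠ 1 → y ≠ 1 → x * y = 1 := by decide

variable {π}

theorem oe {x y : G} (hx : π x ≠ 1) (hy : π y = 1) : x * y ≠ 1 := by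
  intro h
  have := congrArg π h
  rw [map_mul, hy, mul_one, map_one] at this
  exact hx this

theorem eo {x y : G} (hx : π x = 1) (hy : π y ≠ 1) : x * y ≠ 1 := by
  intro h
  have := congrArg π h
  rw [map_mul, hx, one_mul, map_one] at this
  exact hy this

theorem eoe {x y z : G} (hx : π x = 1) (hy : π y ≠ 1) (hz : π z = 1) : x * y * z ≠ 1 := by
  refine oe (π := π) ?_ hz
  rwa [map_mul, hx, one_mul]

theorem o1 {x : G} (hx : π x ≠ 1) : x ≠ 1 := by
  rintro rfl
  exact hx (map_one π)

def gg (go ge : ℕ → G) (p : Bool × ℕ) : G := if p.1 then go p.2 else ge p.2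

structure Ctx (π : G →* Multiplicative (ZMod 2)) (go ge : ℕ → G) (v0 v1 : ℕ → Prop) : Prop where
  po : ∀ a, v0 a → π (go a) ≠ 1
  pe : ∀ a, v1 a → π (ge a) = 1
  v7 : v1 7
  g7 : ge 7 = 1
  l0 : ∀ a, v0 a → a < 8
  l1 : ∀ a, v1 a → a < 8
  i0 : ∀ a b, v0 a → v0 b → go a = go b → a = b
  i1 : ∀ a b, v1 a → v1 b → ge a = ge b → a = b

variable {go ge : ℕ → G} {v0 v1 : ℕ → Prop}

def VV (v0 v1 : ℕ → Prop) (p : Bool × ℕ) : Prop := if p.1 then v0 p.2 else v1 p.2 ∧ p.2 ≠ 7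

theorem truth_mk (C : Ctx π go ge v0 v1) {a b c d : ℕ} (ha : v0 a) (hb : v1 b) (hc : v0 c)
    (hd : v1 d) : TruthG go ge v0 v1 (mk a b c d) ↔ go a * ge b * go c * ge d = 1 := by
  have := truth_dg (f0 := go) (f1 := ge) (v0 := v0) (v1 := v1) (n := 0)
    (C.l0 a ha) (C.l1 b hb) (C.l0 c hc) (C.l1 d hd)
  rw [show mk a b c d = 0 * 4096 + a * 512 + b * 64 + c * 8 + d by unfold mk; omega, this]
  tauto

theorem ge_ne (C : Ctx π go ge v0 v1) {a : ℕ} (ha : v1 a) (h7 : a ≠ 7) : ge a ≠ 1 := by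
  intro h
  exact h7 (C.i1 _ _ ha C.v7 (h.trans C.g7.symm))

theorem wins_wk (C : Ctx π go ge v0 v1) : ∀ (b : Bool) (l : List ℕ),
    (∀ p ∈ tag b l, VV v0 v1 p) → (∀ w ∈ wins b l, ¬ TruthG go ge v0 v1 w) →
    Wk ((tag b l).map (gg go ge))
  | _, [], _, _ => trivial
  | true, [a], hv, _ => by
    simp [tag, VV, gg] at hv ⊢
    exact wk1 (o1 (C.po _ hv))
  | false, [a], hv, _ => by
    simp [tag, VV, gg] at hv ⊢
    exact wk1 (ge_ne C hv.1 hv.2)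
  | true, [a, b], hv, _ => by
    simp [tag, VV, gg] at hv ⊢
    exact wk2 (o1 (C.po _ hv.1)) (oe (C.po _ hv.1) (C.pe _ hv.2.1)) (ge_ne C hv.2.1 hv.2.2)
  | false, [a, b], hv, _ => by
    simp [tag, VV, gg] at hv ⊢
    exact wk2 (ge_ne C hv.1.1 hv.1.2) (eo (C.pe _ hv.1.1) (C.po _ hv.2)) (o1 (C.po _ hv.2))
  | true, [a, b, c], hv, hw => by
    have ih := wins_wk C false [b, c] (fun p hp => hv p (by simp [tag] at hp ⊢; tauto))
      (by simp [wins])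
    simp [tag, VV, gg, wins] at hv hw ih ⊢
    rw [truth_mk C hv.1 hv.2.1.1 hv.2.2 C.v7, C.g7, mul_one] at hw
    exact ih.cons2 (o1 (C.po _ hv.1)) (oe (C.po _ hv.1) (C.pe _ hv.2.1.1)) hw
  | false, [a, b, c], hv, _ => by
    have ih := wins_wk C true [b, c] (fun p hp => hv p (by simp [tag] at hp ⊢; tauto))
      (by simp [wins])
    simp [tag, VV, gg] at hv ih ⊢
    exact ih.cons2 (ge_ne C hv.1.1 hv.1.2) (eo (C.pe _ hv.1.1) (C.po _ hv.2.1))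
      (eoe (C.pe _ hv.1.1) (C.po _ hv.2.1) (C.pe _ hv.2.2.1))
  | true, a :: b :: c :: d :: t, hv, hw => by
    have ih := wins_wk C false (b :: c :: d :: t)
      (fun p hp => hv p (by simp [tag] at hp ⊢; tauto))
      (fun w h => hw w (by simp [wins] at h ⊢; tauto))
    have ha := hv (true, a) (by simp [tag])
    have hb := hv (false, b) (by simp [tag])
    have hc := hv (true, c) (by simp [tag])
    have hd := hv (false, d) (by simp [tag])
    have h1 := hw (mk a b c d) (by simp [wins])
    have h2 := hw (mk a b c 7) (by simp [wins])
    simp [VV] at ha hb hc hd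
    rw [truth_mk C ha hb.1 hc hd.1] at h1
    rw [truth_mk C ha hb.1 hc C.v7, C.g7, mul_one] at h2
    simp [tag, gg] at ih ⊢
    exact ih.cons3 (o1 (C.po _ ha)) (oe (C.po _ ha) (C.pe _ hb.1)) h2 h1
  | false, a :: b :: c :: d :: t, hv, hw => by
    have ih := wins_wk C true (b :: c :: d :: t)
      (fun p hp => hv p (by simp [tag] at hp ⊢; tauto))
      (fun w h => hw w (by simp [wins] at h ⊢; tauto))
    have ha := hv (false, a) (by simp [tag])
    have hb := hv (true, b) (by simp [tag])
    have hc := hv (false, c) (by simp [tag])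
    have hd := hv (true, d) (by simp [tag])
    have h1 := hw (mk b c d a) (by simp [wins])
    simp [VV] at ha hb hc hd
    rw [truth_mk C hb hc.1 hd ha.1] at h1
    simp [tag, gg] at ih ⊢
    exact ih.cons3 (ge_ne C ha.1 ha.2) (eo (C.pe _ ha.1) (C.po _ hb))
      (eoe (C.pe _ ha.1) (C.po _ hb) (C.pe _ hc.1)) (fun h => h1 (rot4 h))

def Ch (π : G →* Multiplicative (ZMod 2)) (l : List G) : Prop :=
  l.IsChain (fun a b => π a ≠ π b)

theorem tag_ch (C : Ctx π go ge v0 v1) : ∀ (b : Bool) (l : List ℕ),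
    (∀ p ∈ tag b l, VV v0 v1 p) → Ch π ((tag b l).map (gg go ge))
  | _, [], _ => by simp [tag, Ch]
  | _, [a], _ => by simp [tag, Ch]
  | b, a :: c :: l, hv => by
    have ih := tag_ch C (!b) (c :: l) (fun p hp => hv p (by simp [tag] at hp ⊢; tauto))
    have ha := hv (b, a) (by simp [tag])
    have hc := hv (!b, c) (by simp [tag])
    simp only [tag, List.map_cons, Ch] at ih ⊢
    refine List.IsChain.cons_cons ?_ ih
    cases b <;> simp [VV, gg] at ha hc ⊢
    · rw [C.pe _ ha.1]; exact fun h => C.po _ hc h.symm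
    · rw [C.pe _ hc.1]; exact C.po _ ha

theorem Ch.glue {u s v : List G} (hs : s ≠ []) (h1 : Ch π (u ++ s)) (h2 : Ch π (s ++ v)) :
    Ch π (u ++ (s ++ v)) := by
  rw [← List.append_assoc]
  exact List.IsChain.append_overlap h1 h2 hs

theorem hyp_of (C : Ctx π go ge v0 v1) (hodd : ∀ h : G, π h = 1 → h * h = 1 → h = 1) :
    Hyp go ge v0 v1 where
  i0 := C.i0
  i1 := C.i1
  s0 a b ha hb h := by
    have := hodd _ (by rw [map_mul, map_inv]; exact z2 (inv_ne_one.mpr (C.po _ ha)) (C.po _ hb)) h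
    exact (inv_mul_eq_one.mp this)
  s1 a b ha hb h := by
    have := hodd _ (by rw [map_mul, map_inv, C.pe _ ha, C.pe _ hb]; simp) h
    exact (inv_mul_eq_one.mp this)

end Grp

section Endgame
variable {G : Type*} [Group G] {π : G →* Multiplicative (ZMod 2)}

def Good (π : G →* Multiplicative (ZMod 2)) (M : Multiset G) : Prop :=
  ∃ L : List G, (L : Multiset G) = M ∧ Ch π L ∧ Wk L

theorem getD_inj {A : List G} (hA : A.Nodup) {a b : ℕ} (ha : a < A.length) (hb : b < A.length)
    (h : A.getD a 1 = A.getD b 1) : a = b := by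
  rw [List.getD_eq_getElem _ _ ha, List.getD_eq_getElem _ _ hb] at h
  exact (hA.getElem_inj_iff).mp h

theorem getD_mem' {A : List G} {a : ℕ} (ha : a < A.length) : A.getD a 1 ∈ A := by
  rw [List.getD_eq_getElem _ _ ha]; exact List.getElem_mem ha

theorem mkCtx {A B : List G} (hA : A.Nodup) (hB : B.Nodup) (lA : A.length ≤ 7)
    (lB : B.length ≤ 7) (oA : ∀ a ∈ A, π a ≠ 1) (eB : ∀ a ∈ B, π a = 1 ∧ a ≠ 1) :
    Ctx π (fun n => A.getD n 1) (fun n => B.getD n 1) (fun n => n < A.length)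
      (fun n => n < B.length ∨ n = 7) where
  po a ha := oA _ (getD_mem' ha)
  pe a ha := by
    rcases ha with ha | rfl
    · exact (eB _ (getD_mem' ha)).1
    · rw [List.getD_eq_default _ _ lB, map_one]
  v7 := Or.inr rfl
  g7 := List.getD_eq_default _ _ lB
  l0 a ha := by omega
  l1 a ha := by omega
  i0 a b ha hb h := getD_inj hA ha hb h
  i1 a b ha hb h := by
    rcases ha with ha | rfl <;> rcases hb with hb | rfl
    · exact getD_inj hB ha hb h
    · simp only [List.getD_eq_default _ _ lB] at h
      exact ((eB _ (getD_mem' ha)).2 h).elim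
    · simp only [List.getD_eq_default _ _ lB] at h
      exact ((eB _ (getD_mem' hb)).2 h.symm).elim
    · rfl

theorem end4 (hodd : ∀ h : G, π h = 1 → h * h = 1 → h = 1) {x0 x1 x2 x3 z0 z1 z2 z3 : G}
    (hA : [x0, x1, x2, x3].Nodup) (hB : [z0, z1, z2, z3].Nodup)
    (oA : ∀ a ∈ [x0, x1, x2, x3], π a ≠ 1) (eB : ∀ a ∈ [z0, z1, z2, z3], π a = 1 ∧ a ≠ 1) :
    Good π ([x0, x1, x2, x3, z0, z1, z2, z3] : List G) := by
  have C := mkCtx hA hB (by simp) (by simp) oA eB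
  refine check_sound (hyp_of C hodd) (arr := arr4) (F := 0) ?_ (by simp) ok4
  intro c hc
  have hp := fact4 (c % 24) (Nat.mod_lt _ (by norm_num)) (c / 24 % 24) (Nat.mod_lt _ (by norm_num))
  have hv : ∀ p ∈ tag false (seq4 (c % 24) (c / 24 % 24)),
      VV (fun n => n < [x0, x1, x2, x3].length) (fun n => n < [z0, z1, z2, z3].length ∨ n = 7) p := by
    intro p h
    have := hp.mem_iff.mp h
    simp only [List.mem_cons, List.not_mem_nil, _root_.or_false] at this
    rcases this with rfl | rfl | rfl | rfl | rfl | rfl | rfl | rfl <;> simp [VV]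
  refine ⟨_, ?_, tag_ch C _ _ hv, wins_wk C _ _ hv hc⟩
  refine (Multiset.coe_eq_coe.mpr (hp.map _)).trans ?_
  simp [gg]

theorem end3 (hodd : ∀ h : G, π h = 1 → h * h = 1 → h = 1)
    {x0 x1 x2 o1 o' o'' z0 z1 z2 e1 e2 e' : G} {mid : List G}
    (hA : [x0, x1, x2, o1, o', o''].Nodup) (hB : [z0, z1, z2, e1, e2, e'].Nodup)
    (oA : ∀ a ∈ [x0, x1, x2, o1, o', o''], π a ≠ 1)
    (eB : ∀ a ∈ [z0, z1, z2, e1, e2, e'], π a = 1 ∧ a ≠ 1)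
    (hw : Wk (o' :: e' :: o'' :: (mid ++ [e2, o1, e1])))
    (hch : Ch π (o' :: e' :: o'' :: (mid ++ [e2, o1, e1])))
    (hx : ∀ x ∈ [x0, x1, x2], o1 * e1 * x ≠ 1 ∧ e2 * o1 * e1 * x ≠ 1) :
    Good π (([x0, x1, x2, z0, z1, z2] : List G) +
      ((o' :: e' :: o'' :: (mid ++ [e2, o1, e1]) : List G) : Multiset G)) := by
  have C := mkCtx hA hB (by simp) (by simp) oA eB
  have h7 : ∀ a b c : ℕ, a < 6 → b < 6 → c < 6 →
      [x0, x1, x2, o1, o', o''].getD a 1 * [z0, z1, z2, e1, e2, e'].getD b 1 *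
        [x0, x1, x2, o1, o', o''].getD c 1 ≠ 1 →
      ¬ TruthG (fun n => [x0, x1, x2, o1, o', o''].getD n 1)
        (fun n => [z0, z1, z2, e1, e2, e'].getD n 1)
        (fun n => n < [x0, x1, x2, o1, o', o''].length)
        (fun n => n < [z0, z1, z2, e1, e2, e'].length ∨ n = 7) (mk a b c 7) := by
    intro a b c ha hb hc h
    rw [truth_mk C (by simpa using ha) (by left; simpa using hb) (by simpa using hc)
      (Or.inr rfl)]
    simpa using h
  have h4 : ∀ a b c d : ℕ, a < 6 → b < 6 → c < 6 → d < 6 →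
      [x0, x1, x2, o1, o', o''].getD a 1 * [z0, z1, z2, e1, e2, e'].getD b 1 *
        [x0, x1, x2, o1, o', o''].getD c 1 * [z0, z1, z2, e1, e2, e'].getD d 1 ≠ 1 →
      ¬ TruthG (fun n => [x0, x1, x2, o1, o', o''].getD n 1)
        (fun n => [z0, z1, z2, e1, e2, e'].getD n 1)
        (fun n => n < [x0, x1, x2, o1, o', o''].length)
        (fun n => n < [z0, z1, z2, e1, e2, e'].length ∨ n = 7) (mk a b c d) := by
    intro a b c d ha hb hc hd h
    rw [truth_mk C (by simpa using ha) (by left; simpa using hb) (by simpa using hc)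
      (by left; simpa using hd)]
    exact h
  refine check_sound (hyp_of C hodd) (arr := arr3) (F := F3) ?_ ?_ ok3
  · intro c hc
    have lc : c % 6 < 6 := Nat.mod_lt _ (by norm_num)
    have ld : c / 6 % 6 < 6 := Nat.mod_lt _ (by norm_num)
    have la : c / 36 % 7 < 7 := Nat.mod_lt _ (by norm_num)
    unfold arr3 at hc
    generalize c % 6 = p at *
    generalize c / 6 % 6 = q at *
    generalize c / 36 % 7 = a at *
    clear c
    have hp := fact3a p lc q ld a la
    have hb := fact3b p lc q ld a la
    unfold arr3' at hc
    have hv : ∀ t ∈ tag (a % 2 == 0) (backL p q a).reverse ++ tag true (frontL p q a),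
        VV (fun n => n < [x0, x1, x2, o1, o', o''].length)
          (fun n => n < [z0, z1, z2, e1, e2, e'].length ∨ n = 7) t := by
      intro t h
      have := hp.mem_iff.mp h
      simp only [List.mem_cons, List.not_mem_nil, _root_.or_false] at this
      rcases this with rfl | rfl | rfl | rfl | rfl | rfl <;> simp [VV]
    have hv1 : ∀ t ∈ tag (a % 2 == 0) ((backL p q a).reverse ++ [4, 5, 5]),
        VV (fun n => n < [x0, x1, x2, o1, o', o''].length)
          (fun n => n < [z0, z1, z2, e1, e2, e'].length ∨ n = 7) t := by
      intro t h
      rw [hb, List.mem_append] at h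
      rcases h with h | h
      · exact hv t (List.mem_append_left _ h)
      · simp only [List.mem_cons, List.not_mem_nil, _root_.or_false] at h
        rcases h with rfl | rfl | rfl <;> simp [VV]
    have hv2 : ∀ t ∈ tag false ([4, 3, 3] ++ frontL p q a),
        VV (fun n => n < [x0, x1, x2, o1, o', o''].length)
          (fun n => n < [z0, z1, z2, e1, e2, e'].length ∨ n = 7) t := by
      intro t h
      simp only [tag, List.cons_append, List.nil_append, List.mem_cons, Bool.not_false,
        Bool.not_true] at h
      rcases h with rfl | rfl | rfl | h
      · simp [VV]
      · simp [VV]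
      · simp [VV]
      · exact hv t (List.mem_append_right _ h)
    have w1 := wins_wk C _ _ hv1 fun w h => hc w (List.mem_append_left _ h)
    have w2 := wins_wk C _ _ hv2 fun w h => hc w (List.mem_append_right _ h)
    have c1 := tag_ch C _ _ hv1
    have c2 := tag_ch C _ _ hv2
    have hp2 := hp.map (gg (fun n => [x0, x1, x2, o1, o', o''].getD n 1)
        (fun n => [z0, z1, z2, e1, e2, e'].getD n 1))
    rw [hb, List.map_append] at w1 c1
    rw [show tag false ([4, 3, 3] ++ frontL p q a) =
      [(false, 4), (true, 3), (false, 3)] ++ tag true (frontL p q a) from rfl,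
      List.map_append] at w2 c2
    rw [List.map_append] at hp2
    rw [show List.map (gg (fun n => [x0, x1, x2, o1, o', o''].getD n 1)
        (fun n => [z0, z1, z2, e1, e2, e'].getD n 1)) [(true, 4), (false, 5), (true, 5)] =
        [o', e', o''] by simp [gg]] at w1 c1
    rw [show List.map (gg (fun n => [x0, x1, x2, o1, o', o''].getD n 1)
        (fun n => [z0, z1, z2, e1, e2, e'].getD n 1)) [(false, 4), (true, 3), (false, 3)] =
        [e2, o1, e1] by simp [gg]] at w2 c2
    rw [show List.map (gg (fun n => [x0, x1, x2, o1, o', o''].getD n 1)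
        (fun n => [z0, z1, z2, e1, e2, e'].getD n 1))
        [(true, 0), (true, 1), (true, 2), (false, 0), (false, 1), (false, 2)] =
        [x0, x1, x2, z0, z1, z2] by simp [gg]] at hp2
    generalize List.map (gg (fun n => [x0, x1, x2, o1, o', o''].getD n 1)
        (fun n => [z0, z1, z2, e1, e2, e'].getD n 1))
        (tag (a % 2 == 0) (backL p q a).reverse) = U at *
    generalize List.map (gg (fun n => [x0, x1, x2, o1, o', o''].getD n 1)
        (fun n => [z0, z1, z2, e1, e2, e'].getD n 1)) (tag true (frontL p q a)) = V at *
    refine ⟨U ++ ([o', e', o''] ++ (mid ++ ([e2, o1, e1] ++ V))), ?_, ?_, ?_⟩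
    · have := Multiset.coe_eq_coe.mpr hp2
      rw [← this]
      simp only [← Multiset.coe_add]
      simp only [← Multiset.cons_coe, ← Multiset.singleton_add, ← Multiset.coe_add]
      abel
    · refine Ch.glue (by simp) c1 ?_
      rw [← List.append_assoc]
      exact Ch.glue (by simp) (by simpa using hch) c2
    · refine Wk.glue (by simp) ?_ _ w1
      rw [← List.append_assoc]
      exact Wk.glue (by simp) w2 _ (by simpa using hw)
  · unfold F3
    have hx0 := hx x0 (by simp)
    have hx1 := hx x1 (by simp)
    have hx2 := hx x2 (by simp)
    refine or_false (or_false (or_false (or_false (or_false (or_false (bits_false ?_)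
      (bits_false ?_)) (bits_false ?_)) (bits_false ?_)) (bits_false ?_)) (bits_false ?_))
      (bits_false ?_)
    · refine h7 _ _ _ (by omega) (by omega) (by omega) ?_
      have := hw.1 3 (by omega) (by omega) (by simp)
      simpa [mul_assoc] using this
    · exact h7 _ _ _ (by omega) (by omega) (by omega) hx0.1
    · exact h7 _ _ _ (by omega) (by omega) (by omega) hx1.1
    · exact h7 _ _ _ (by omega) (by omega) (by omega) hx2.1
    · exact h4 _ _ _ _ (by omega) (by omega) (by omega) (by omega)
        fun h => hx0.2 (rot4 (rot4 (rot4 h)))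
    · exact h4 _ _ _ _ (by omega) (by omega) (by omega) (by omega)
        fun h => hx1.2 (rot4 (rot4 (rot4 h)))
    · exact h4 _ _ _ _ (by omega) (by omega) (by omega) (by omega)
        fun h => hx2.2 (rot4 (rot4 (rot4 h)))

end Endgame

section Greedy
variable {G : Type*} [Group G] {π : G →* Multiplicative (ZMod 2)}

theorem step {E : Finset G} (hE : ∀ e ∈ E, π e = 1 ∧ e ≠ 1) (hc : 4 ≤ E.card) {o e : G}
    {t : List G} (ho : π o ≠ 1) (he : π e = 1) (hw : Wk (o :: e :: t)) (hch : Ch π (o :: e :: t))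
    {x : G} (hx : π x ≠ 1) :
    ∃ e' ∈ E, Wk (x :: e' :: o :: e :: t) ∧ Ch π (x :: e' :: o :: e :: t) := by
  classical
  obtain ⟨y, hy, hn⟩ : ∃ y ∈ E, y ∉ ({(o * e * t.headD 1)⁻¹, x⁻¹ * o⁻¹, x⁻¹ * (o * e)⁻¹} : Finset G) := by
    apply Finset.exists_mem_notMem_of_card_lt_card
    exact lt_of_le_of_lt Finset.card_le_three (by omega)
  simp only [Finset.mem_insert, Finset.mem_singleton, not_or] at hn
  obtain ⟨n1, n2, n3⟩ := hn
  obtain ⟨hy1, hy2⟩ := hE y hy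
  have k1 : y * o * e * t.headD 1 ≠ 1 := by
    intro h; apply n1; rw [eq_inv_iff_mul_eq_one]; simpa [mul_assoc] using h
  have k2 : x * y * o ≠ 1 := by
    intro h; apply n2; rw [eq_inv_mul_iff_mul_eq, eq_inv_iff_mul_eq_one]; exact h
  have k3 : x * y * o * e ≠ 1 := by
    intro h; apply n3; rw [eq_inv_mul_iff_mul_eq, eq_inv_iff_mul_eq_one]
    simpa [mul_assoc] using h
  refine ⟨y, hy, ?_, ?_⟩
  · have h1 : Wk (y :: o :: e :: t) := by
      cases t with
      | nil => exact hw.cons2 hy2 (eo hy1 ho) (eoe hy1 ho he)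
      | cons t0 t => exact hw.cons3 hy2 (eo hy1 ho) (eoe hy1 ho he) k1
    exact h1.cons3 (o1 hx) (oe hx hy1) k2 k3
  · refine List.IsChain.cons_cons (by rw [hy1]; exact hx)
      (List.IsChain.cons_cons (by rw [hy1]; exact fun h => ho h.symm) hch)

theorem val_erase [DecidableEq G] {E : Finset G} {e : G} (he : e ∈ E) :
    E.val = {e} + (E.erase e).val := by
  rw [Finset.erase_val, Multiset.singleton_add, Multiset.cons_erase he]

theorem loop (hodd : ∀ h : G, π h = 1 → h * h = 1 → h = 1) {o1 e1 e2 : G} (po1 : π o1 ≠ 1)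
    (pe1 : π e1 = 1 ∧ e1 ≠ 1) (pe2 : π e2 = 1 ∧ e2 ≠ 1) : ∀ (n : ℕ) (E O : Finset G),
    E.card = n + 3 → O.card = n + 3 → (∀ e ∈ E, π e = 1 ∧ e ≠ 1) → (∀ o ∈ O, π o ≠ 1) →
    (∀ x ∈ O, o1 * e1 * x ≠ 1 ∧ e2 * o1 * e1 * x ≠ 1) →
    ∀ (o' e' o'' : G) (mid : List G), π o' ≠ 1 → (π e' = 1 ∧ e' ≠ 1) → π o'' ≠ 1 →
    Wk (o' :: e' :: o'' :: (mid ++ [e2, o1, e1])) →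
    Ch π (o' :: e' :: o'' :: (mid ++ [e2, o1, e1])) →
    (O.val + E.val + ((o' :: e' :: o'' :: (mid ++ [e2, o1, e1]) : List G) : Multiset G)).Nodup →
    Good π (O.val + E.val + ((o' :: e' :: o'' :: (mid ++ [e2, o1, e1]) : List G) : Multiset G)) := by
  intro n
  induction n with
  | zero =>
    intro E O cE cO hE hO hx o' e' o'' mid po' pe' po'' hw hch hnd
    obtain ⟨z0, z1, z2, hz⟩ := List.length_eq_three.mp (show E.toList.length = 3 by simp [cE])
    obtain ⟨x0, x1, x2, hxl⟩ := List.length_eq_three.mp (show O.toList.length = 3 by simp [cO])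
    rw [← Finset.coe_toList O, ← Finset.coe_toList E, hz, hxl] at hnd ⊢
    have hO' : ∀ x ∈ [x0, x1, x2], x ∈ O := by
      intro x h; rw [← hxl] at h; simpa using h
    have hE' : ∀ x ∈ [z0, z1, z2], x ∈ E := by
      intro x h; rw [← hz] at h; simpa using h
    have hl : ([x0, x1, x2] ++ [z0, z1, z2] ++ (o' :: e' :: o'' :: (mid ++ [e2, o1, e1]))).Nodup := by
      simpa [← Multiset.coe_nodup] using hnd
    refine end3 (mid := mid) hodd ?_ ?_ ?_ ?_ hw hch (fun x h => hx x (hO' x h))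
    · clear hw hch hx hnd
      simp at hl ⊢
      grind
    · clear hw hch hx hnd
      simp at hl ⊢
      grind
    · intro a ha
      have : a ∈ [x0, x1, x2] ∨ a = o1 ∨ a = o' ∨ a = o'' := by simp at ha ⊢; tauto
      rcases this with h | rfl | rfl | rfl
      · exact hO _ (hO' _ h)
      all_goals assumption
    · intro a ha
      have : a ∈ [z0, z1, z2] ∨ a = e1 ∨ a = e2 ∨ a = e' := by simp at ha ⊢; tauto
      rcases this with h | rfl | rfl | rfl
      · exact hE _ (hE' _ h)
      all_goals assumption
  | succ n ih =>
    classical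
    intro E O cE cO hE hO hx o' e' o'' mid po' pe' po'' hw hch hnd
    obtain ⟨x, hxO⟩ : O.Nonempty := Finset.card_pos.mp (by omega)
    obtain ⟨e, heE, hw', hch'⟩ := step hE (by omega) po' pe'.1 hw hch (hO x hxO)
    have key := ih (E.erase e) (O.erase x) (by rw [Finset.card_erase_of_mem heE]; omega)
      (by rw [Finset.card_erase_of_mem hxO]; omega)
      (fun a h => hE a (Finset.mem_of_mem_erase h)) (fun a h => hO a (Finset.mem_of_mem_erase h))
      (fun a h => hx a (Finset.mem_of_mem_erase h)) x e o' (e' :: o'' :: mid) (hO x hxO) (hE e heE)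
      po' hw' hch'
    have heq : (O.erase x).val + (E.erase e).val +
        ((x :: e :: o' :: (e' :: o'' :: mid ++ [e2, o1, e1]) : List G) : Multiset G) =
        O.val + E.val + ((o' :: e' :: o'' :: (mid ++ [e2, o1, e1]) : List G) : Multiset G) := by
      rw [val_erase heE, val_erase hxO]
      simp only [List.cons_append, ← Multiset.cons_coe, ← Multiset.singleton_add]
      abel
    rw [heq] at key
    exact key hnd

theorem pick [DecidableEq G] {O : Finset G} (h : O.Nonempty) (f : G) :
    ∃ x ∈ O, f ∉ O.erase x := by
  by_cases hf : f ∈ O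
  · exact ⟨f, hf, by simp⟩
  · obtain ⟨x, hx⟩ := h
    exact ⟨x, hx, fun h => hf (Finset.mem_of_mem_erase h)⟩

theorem big (hodd : ∀ h : G, π h = 1 → h * h = 1 → h = 1) {E O : Finset G} {n : ℕ}
    (cE : E.card = n + 6) (cO : O.card = n + 6) (hE : ∀ e ∈ E, π e = 1 ∧ e ≠ 1)
    (hO : ∀ o ∈ O, π o ≠ 1) : Good π (O.val + E.val) := by
  classical
  have hnd : (O.val + E.val).Nodup := by
    rw [Multiset.nodup_add]
    refine ⟨O.nodup, E.nodup, ?_⟩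
    rw [Finset.disjoint_val, Finset.disjoint_left]
    exact fun a h1 h2 => hO a h1 (hE a h2).1
  obtain ⟨o1, ho1⟩ : O.Nonempty := Finset.card_pos.mp (by omega)
  obtain ⟨e1, he1⟩ : E.Nonempty := Finset.card_pos.mp (by omega)
  have po1 := hO o1 ho1
  have pe1 := hE e1 he1
  set O1 := O.erase o1 with hO1
  set E1 := E.erase e1 with hE1
  have cO1 : O1.card = n + 5 := by rw [hO1, Finset.card_erase_of_mem ho1]; omega
  have cE1 : E1.card = n + 5 := by rw [hE1, Finset.card_erase_of_mem he1]; omega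
  have hEE1 : ∀ e ∈ E1, π e = 1 ∧ e ≠ 1 := fun a h => hE a (Finset.mem_of_mem_erase h)
  have hOO1 : ∀ o ∈ O1, π o ≠ 1 := fun a h => hO a (Finset.mem_of_mem_erase h)
  have w1 : Wk [o1, e1] := wk2 (WS.o1 po1) (oe po1 pe1.1) pe1.2
  have c1 : Ch π [o1, e1] := List.IsChain.cons_cons (by rw [pe1.1]; exact po1) (by simp)
  obtain ⟨o2, ho2, hf1⟩ := pick (O := O1) (Finset.card_pos.mp (by omega)) (o1 * e1)⁻¹
  have po2 := hOO1 o2 ho2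
  obtain ⟨e2, he2, w2, c2⟩ := step hEE1 (by omega) po1 pe1.1 w1 c1 po2
  have pe2 := hEE1 e2 he2
  set O2 := O1.erase o2 with hO2
  set E2 := E1.erase e2 with hE2
  have cO2 : O2.card = n + 4 := by rw [hO2, Finset.card_erase_of_mem ho2]; omega
  have cE2 : E2.card = n + 4 := by rw [hE2, Finset.card_erase_of_mem he2]; omega
  have hEE2 : ∀ e ∈ E2, π e = 1 ∧ e ≠ 1 := fun a h => hEE1 a (Finset.mem_of_mem_erase h)
  have hOO2 : ∀ o ∈ O2, π o ≠ 1 := fun a h => hOO1 a (Finset.mem_of_mem_erase h)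
  obtain ⟨o3, ho3, hf2⟩ := pick (O := O2) (Finset.card_pos.mp (by omega)) (e2 * o1 * e1)⁻¹
  have po3 := hOO2 o3 ho3
  obtain ⟨e3, he3, w3, c3⟩ := step hEE2 (by omega) po2 pe2.1 w2 c2 po3
  have pe3 := hEE2 e3 he3
  have key := loop hodd po1 pe1 pe2 n (E2.erase e3) (O2.erase o3)
    (by rw [Finset.card_erase_of_mem he3]; omega) (by rw [Finset.card_erase_of_mem ho3]; omega)
    (fun a h => hEE2 a (Finset.mem_of_mem_erase h)) (fun a h => hOO2 a (Finset.mem_of_mem_erase h))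
    (by
      intro x hx
      constructor
      · intro h
        rw [← inv_eq_iff_mul_eq_one] at h
        rw [h] at hf1
        exact hf1 (Finset.mem_of_mem_erase hx)
      · intro h
        rw [← inv_eq_iff_mul_eq_one] at h
        rw [h] at hf2
        exact hf2 hx) o3 e3 o2 [] po3 pe3 po2 w3 c3
  have heq : (O2.erase o3).val + (E2.erase e3).val +
      ((o3 :: e3 :: o2 :: ([] ++ [e2, o1, e1]) : List G) : Multiset G) = O.val + E.val := by
    rw [val_erase ho1, val_erase he1, ← hO1, ← hE1, val_erase ho2, val_erase he2, ← hO2, ← hE2,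
      val_erase ho3, val_erase he3]
    simp only [List.nil_append, ← Multiset.cons_coe, ← Multiset.singleton_add, Multiset.coe_nil]
    abel
  rw [heq] at key
  exact key hnd

theorem small (hodd : ∀ h : G, π h = 1 → h * h = 1 → h = 1) {E O : Finset G}
    (cE : E.card = 4) (cO : O.card = 4) (hE : ∀ e ∈ E, π e = 1 ∧ e ≠ 1)
    (hO : ∀ o ∈ O, π o ≠ 1) : Good π (O.val + E.val) := by
  have four : ∀ l : List G, l.length = 4 → ∃ a b c d, l = [a, b, c, d] := by
    intro l hl
    match l, hl with
    | [a, b, c, d], _ => exact ⟨a, b, c, d, rfl⟩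
  obtain ⟨z0, z1, z2, z3, hz⟩ := four E.toList (by simp [cE])
  obtain ⟨x0, x1, x2, x3, hx⟩ := four O.toList (by simp [cO])
  have h := end4 hodd (x0 := x0) (x1 := x1) (x2 := x2) (x3 := x3) (z0 := z0) (z1 := z1) (z2 := z2)
    (z3 := z3) (by rw [← hx]; exact O.nodup_toList) (by rw [← hz]; exact E.nodup_toList)
    (by rw [← hx]; intro a ha; exact hO a (by simpa using ha))
    (by rw [← hz]; intro a ha; exact hE a (by simpa using ha))
  rw [← Finset.coe_toList O, ← Finset.coe_toList E, hz, hx]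
  exact h

end Greedy

end WS

/-- Let `N` be a finite group of odd order and `G = N ⋊_φ Z_2`.
Every balanced subset of `G \ {(0,0)}` of size `k ≡ 8 (mod 10)` admits an alternating
parity `4`-weak sequencing. -/
theorem stmt11 {N : Type*} [Group N] [Finite N] (hodd : Odd (Nat.card N))
    (φ : Z2 →* MulAut N) (S : Finset (N ⋊[φ] Z2)) (hS1 : (1 : N ⋊[φ] Z2) ∉ S)
    (hke : Even S.card) (htype : HasType S (S.card / 2) (S.card / 2))
    (hmod : S.card % 10 = 8) :
    ∃ l : List (N ⋊[φ] Z2), IsOrderingOf l S ∧ AltList l ∧ WeakSeqList 4 l := by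
  classical
  have hsq : ∀ h : N ⋊[φ] Z2, SemidirectProduct.rightHom h = 1 → h * h = 1 → h = 1 := by
    intro h h1 h2
    have hr : h.right = 1 := h1
    have hl : h.left * h.left = 1 := by
      have := congrArg SemidirectProduct.left h2
      rw [SemidirectProduct.mul_left, hr] at this
      simpa using this
    have hl1 : h.left = 1 := by
      have hd : orderOf h.left ∣ 2 := orderOf_dvd_of_pow_eq_one (by rw [pow_two]; exact hl)
      have hd2 : orderOf h.left ∣ Nat.card N := orderOf_dvd_natCard _
      have hc : Nat.Coprime 2 (Nat.card N) := (Nat.coprime_two_left).mpr hodd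
      exact orderOf_eq_one_iff.mp (Nat.eq_one_of_dvd_coprimes hc hd hd2)
    exact SemidirectProduct.ext hl1 hr
  set E := S.filter (fun g => g.right = 1) with hEdef
  set O := S.filter (fun g => ¬ g.right = 1) with hOdef
  have hsum : E.card + O.card = S.card := Finset.card_filter_add_card_filter_not _
  have hE0 : E.card = S.card / 2 := htype.1
  have hE : ∀ e ∈ E, (SemidirectProduct.rightHom : N ⋊[φ] Z2 →* Z2) e = 1 ∧ e ≠ 1 := by
    intro e he
    rw [hEdef, Finset.mem_filter] at he
    exact ⟨he.2, fun h => hS1 (h ▸ he.1)⟩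
  have hO : ∀ o ∈ O, (SemidirectProduct.rightHom : N ⋊[φ] Z2 →* Z2) o ≠ 1 := by
    intro o ho
    rw [hOdef, Finset.mem_filter] at ho
    exact ho.2
  have hgood : WS.Good (SemidirectProduct.rightHom : N ⋊[φ] Z2 →* Z2) (O.val + E.val) := by
    by_cases h4 : S.card = 8
    · exact WS.small hsq (by omega) (by omega) hE hO
    · exact WS.big (n := E.card - 6) hsq (by omega) (by omega) hE hO
  obtain ⟨L, hL, hch, hw⟩ := hgood
  have hLS : (L : Multiset (N ⋊[φ] Z2)) = S.val := by
    rw [hL, hEdef, hOdef, Finset.filter_val, Finset.filter_val, add_comm,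
      Multiset.filter_add_not]
  refine ⟨L, ⟨?_, ?_⟩, hch, hw.weak⟩
  · rw [← Multiset.coe_nodup, hLS]; exact S.nodup
  · intro x
    rw [← Multiset.mem_coe, hLS]; rfl
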